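/- arXiv:0912.1094 — 5 statements merged into one kernel-verified Lean document; each statement's English description precedes it below -/
import Mathlib

section
/- The shift T is nonsingular with respect to P (i.e. P∘T and P are mutually absolutely continuous) if and only if ∑_{k∈ℤ} (P_k({0}) − P_{k−1}({0}))² < ∞. -/
open MeasureTheory Filter Topology

noncomputable section

/-- The sequence space `{0,1}^ℤ`, with `true` playing the role of `1`. -/
abbrev Xspace := ℤ → Bool

/-- The left shift `(Tw)_i = w_{i+1}`. -/
def shiftT (w : Xspace) : Xspace := fun i => w (i + 1)

/-- The inverse of the left shift, so that `P ∘ T = Measure.map shiftInv P`. -/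
def shiftInv (w : Xspace) : Xspace := fun i => w (i - 1)

/-- `coordWt p b` is `P_k({b})` when `P_k({0}) = p`. -/
def coordWt (p : ℝ) (b : Bool) : ℝ := if b then 1 - p else p

/-- The set `A_t = {∏_{u=1}^t λ_u^{x_u} : x_u ∈ ℤ, |x_u| ≤ n_u}`. -/
def Aset (lam : ℕ → ℝ) (nn : ℕ → ℕ) (t : ℕ) : Set ℝ :=
  {x | ∃ c : ℕ → ℤ, (∀ u, |c u| ≤ (nn u : ℤ)) ∧ x = ∏ u ∈ Finset.Icc 1 t, lam u ^ c u}

/-- The data of Kosloff's inductive construction: a summable sequence `ε_t > 0`,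
`M_0 = 1`, `λ_t = exp(2^{-k_t})` with `k_t = ⌊log₂(M_{t-1}/ε_t)⌋ + 1`,
`n_t` a positive integer satisfying Property *, `N_t = M_{t-1} + n_t`,
`m_t = N_t (2 + 2^{3N_t})`, `M_t = N_t + m_t`. -/
structure KosloffData where
  eps : ℕ → ℝ
  lam : ℕ → ℝ
  nn : ℕ → ℕ
  M : ℕ → ℕ
  N : ℕ → ℕ
  m : ℕ → ℕ
  eps_pos : ∀ t, 1 ≤ t → 0 < eps t
  eps_summable : Summable eps
  M_zero : M 0 = 1
  lam_def : ∀ t, 1 ≤ t →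
    lam t = Real.exp ((2 : ℝ) ^ (-(⌊Real.logb 2 ((M (t - 1) : ℝ) / eps t)⌋ + 1)))
  nn_pos : ∀ t, 1 ≤ t → 0 < nn t
  prop_star : ∀ t, 1 ≤ t → ∀ a ∈ Aset lam nn (t - 1), a ^ 2 ≤ lam t ^ ((nn t : ℝ) / 4)
  N_def : ∀ t, 1 ≤ t → N t = M (t - 1) + nn t
  m_def : ∀ t, 1 ≤ t → m t = N t * (2 + 2 ^ (3 * N t))
  M_def : ∀ t, 1 ≤ t → M t = N t + m t

/-- `P` is the product measure `∏_k P_k` of Kosloff's construction, where `p k = P_k({0})`: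
`p k = 1/2` for `k ≥ 0`, `p k = 1/(1+λ_t)` for `-N_t < k ≤ -M_{t-1}`, and `p k = 1/2`
for `-M_t < k ≤ -N_t`; cylinders get product mass. -/
def IsKosloffMeasure (D : KosloffData) (p : ℤ → ℝ) (P : Measure Xspace) : Prop :=
  IsProbabilityMeasure P ∧
  (∀ k : ℤ, 0 ≤ k → p k = 1 / 2) ∧
  (∀ t : ℕ, 1 ≤ t → ∀ k : ℤ, -(D.N t : ℤ) < k → k ≤ -(D.M (t - 1) : ℤ) →
      p k = 1 / (1 + D.lam t)) ∧
  (∀ t : ℕ, 1 ≤ t → ∀ k : ℤ, -(D.M t : ℤ) < k → k ≤ -(D.N t : ℤ) → p k = 1 / 2) ∧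
  (∀ k l : ℤ, ∀ b : ℤ → Bool,
    P {w : Xspace | ∀ i ∈ Finset.Icc k l, w i = b i}
      = ∏ i ∈ Finset.Icc k l, ENNReal.ofReal (coordWt (p i) (b i)))

/-- The Radon–Nikodym derivative `(Tⁿ)' = d(P∘Tⁿ)/dP`. -/
def rnD (P : Measure Xspace) (n : ℕ) : Xspace → ENNReal :=
  Measure.rnDeriv (Measure.map (shiftInv^[n]) P) P

/-- `T` is nonsingular: `P∘T` and `P` are mutually absolutely continuous. -/
def ShiftNonsingular (P : Measure Xspace) : Prop :=
  Measure.map shiftInv P ≪ P ∧ P ≪ Measure.map shiftInv P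

/-- The ratio set `R(T,P)` of the shift. -/
def ratioSet (P : Measure Xspace) : Set ℝ :=
  {a | 0 ≤ a ∧ ∀ A : Set Xspace, MeasurableSet A → 0 < P A → ∀ ε : ℝ, 0 < ε → ∃ n : ℕ,
      0 < P (A ∩ shiftT^[n] ⁻¹' A ∩ {w | |(rnD P n w).toReal - a| ≤ ε})}

/-- `t(n) = min {t ≥ 1 : n < N_t}`. -/
def tOf (D : KosloffData) (n : ℕ) : ℕ := sInf {t : ℕ | 1 ≤ t ∧ n < D.N t}

/-- `Υ_u(w) = ∑_{k=-N_u+1}^{-M_{u-1}} w_k`. -/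
def Ups (D : KosloffData) (u : ℕ) (w : Xspace) : ℤ :=
  ∑ k ∈ Finset.Icc (-(D.N u : ℤ) + 1) (-(D.M (u - 1) : ℤ)), (if w k then 1 else 0)

/-- `f_t(w) = ∏_{u=1}^t λ_u^{Υ_u(w)}`. -/
def fT (D : KosloffData) (t : ℕ) (w : Xspace) : ℝ :=
  ∏ u ∈ Finset.Icc 1 t, D.lam u ^ Ups D u w

/-- The ratio `P_{k-n}({w_k}) / P_k({w_k})`. -/
def rr (p : ℤ → ℝ) (n : ℕ) (w : Xspace) (k : ℤ) : ℝ :=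
  coordWt (p (k - n)) (w k) / coordWt (p k) (w k)

/-- A general product measure on `{0,1}^ℤ` with `q k = P_k({1})`. -/
def IsProductMeasure (q : ℤ → ℝ) (P : Measure Xspace) : Prop :=
  IsProbabilityMeasure P ∧
  ∀ k l : ℤ, ∀ b : ℤ → Bool,
    P {w : Xspace | ∀ i ∈ Finset.Icc k l, w i = b i}
      = ∏ i ∈ Finset.Icc k l, ENNReal.ofReal (if b i then q i else 1 - q i)

/-- Real weight of a bit. -/
def bw (t : ℝ) (b : Bool) : ℝ := if b then t else 1 - t

lemma bw_nonneg {t : ℝ} (h0 : 0 ≤ t) (h1 : t ≤ 1) (b : Bool) : 0 ≤ bw t b := by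
  unfold bw; split_ifs <;> linarith

lemma bw_pos {t : ℝ} (h0 : 0 < t) (h1 : t < 1) (b : Bool) : 0 < bw t b := by
  unfold bw; split_ifs <;> linarith

lemma prodMeas_real {q : ℤ → ℝ} {P : Measure Xspace} (hP : IsProductMeasure q P)
    (h0 : ∀ k, 0 ≤ q k) (h1 : ∀ k, q k ≤ 1) (k l : ℤ)
    (S : Finset ((i : Finset.Icc k l) → Bool)) :
    P.real ((Finset.Icc k l).restrict (π := fun _ => Bool) ⁻¹' (S : Set ((i : Finset.Icc k l) → Bool)))
      = ∑ x ∈ S, ∏ i : Finset.Icc k l, bw (q i) (x i) := by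
  have := hP.1
  have hm : ∀ y : ((i : Finset.Icc k l) → Bool),
      MeasurableSet ((Finset.Icc k l).restrict (π := fun _ => Bool) ⁻¹' {y}) := fun y =>
    (Finset.measurable_restrict _) (measurableSet_singleton y)
  rw [measureReal_def, ← sum_measure_preimage_singleton S (fun y _ => hm y),
    ENNReal.toReal_sum (fun _ _ => measure_ne_top _ _)]
  refine Finset.sum_congr rfl fun x _ => ?_
  have e := hP.2 k l (fun i => if h : i ∈ Finset.Icc k l then x ⟨i, h⟩ else false)
  have hs : ((Finset.Icc k l).restrict (π := fun _ => Bool) ⁻¹' {x}) =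
      {w : Xspace | ∀ i ∈ Finset.Icc k l,
        w i = (fun i => if h : i ∈ Finset.Icc k l then x ⟨i, h⟩ else false) i} := by
    ext w
    simp only [Set.mem_preimage, Set.mem_singleton_iff, Set.mem_setOf_eq]
    constructor
    · rintro rfl i hi
      simp only [hi, dite_true]; rfl
    · intro h
      funext i
      have := h i i.2
      simp only [i.2, dite_true] at this
      exact this
  rw [hs, e, ENNReal.toReal_prod, ← Finset.prod_coe_sort]
  refine Finset.prod_congr rfl fun i _ => ?_
  have := bw_nonneg (h0 i) (h1 i) (x i)
  simp only [i.2, dite_true]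
  rw [ENNReal.toReal_ofReal]
  · rfl
  · exact this

lemma sum_prod_bits (F : Finset ℤ) (f : ℤ → Bool → ℝ) :
    ∑ x : (F → Bool), ∏ i : F, f i (x i) = ∏ i ∈ F, (f i true + f i false) := by
  rw [← Finset.prod_coe_sort F]
  have := Finset.prod_univ_sum (ι := F) (κ := fun _ => Bool) (fun _ => Finset.univ)
    (fun i b => f i b)
  simp only [Fintype.piFinset_univ, Fintype.sum_bool] at this
  exact this.symm

lemma finset_sub_Icc (s : Finset ℤ) : ∃ n : ℕ, s ⊆ Finset.Icc (-(n : ℤ)) n := by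
  refine ⟨∑ i ∈ s, i.natAbs, fun i hi => ?_⟩
  have : i.natAbs ≤ ∑ i ∈ s, i.natAbs :=
    Finset.single_le_sum (f := fun i : ℤ => i.natAbs) (fun _ _ => Nat.zero_le _) hi
  rw [Finset.mem_Icc]
  generalize ∑ i ∈ s, i.natAbs = N at *
  omega

lemma cyl_bound {q r : ℤ → ℝ} {μ ν : Measure Xspace} (hμ : IsProductMeasure q μ)
    (hν : IsProductMeasure r ν) {p : ℝ} (hp0 : 0 < p)
    (hq : ∀ k, p < q k ∧ q k < 1 - p) (hr : ∀ k, p < r k ∧ r k < 1 - p)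
    (hs : Summable (fun k => (q k - r k) ^ 2)) (k l : ℤ)
    (S : Finset ((i : Finset.Icc k l) → Bool)) :
    (ν.real ((Finset.Icc k l).restrict (π := fun _ => Bool) ⁻¹' (S : Set ((i : Finset.Icc k l) → Bool)))) ^ 2 ≤
      Real.exp ((∑' k, (q k - r k) ^ 2) / p ^ 2) *
      μ.real ((Finset.Icc k l).restrict (π := fun _ => Bool) ⁻¹' (S : Set ((i : Finset.Icc k l) → Bool))) := by
  have hq0 : ∀ k, 0 < q k := fun k => hp0.trans (hq k).1
  have hq1 : ∀ k, q k < 1 := fun k => by linarith [(hq k).2]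
  have hr0 : ∀ k, 0 < r k := fun k => hp0.trans (hr k).1
  have hr1 : ∀ k, r k < 1 := fun k => by linarith [(hr k).2]
  rw [prodMeas_real hμ (fun k => (hq0 k).le) (fun k => (hq1 k).le),
    prodMeas_real hν (fun k => (hr0 k).le) (fun k => (hr1 k).le)]
  have cs := Finset.sum_sq_le_sum_mul_sum_of_sq_eq_mul S
    (r := fun x => ∏ i : Finset.Icc k l, bw (r i) (x i))
    (f := fun x => ∏ i : Finset.Icc k l, (bw (r i) (x i) ^ 2 / bw (q i) (x i)))
    (g := fun x => ∏ i : Finset.Icc k l, bw (q i) (x i))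
    (fun x _ => Finset.prod_nonneg fun i _ =>
      div_nonneg (sq_nonneg _) (bw_pos (hq0 _) (hq1 _) _).le)
    (fun x _ => Finset.prod_nonneg fun i _ => (bw_pos (hq0 _) (hq1 _) _).le)
    (fun x _ => by
      rw [← Finset.prod_mul_distrib, ← Finset.prod_pow]
      refine Finset.prod_congr rfl fun i _ => ?_
      rw [div_mul_cancel₀ _ (bw_pos (hq0 _) (hq1 _) _).ne'])
  refine cs.trans (mul_le_mul_of_nonneg_right ?_
    (Finset.sum_nonneg fun x _ => Finset.prod_nonneg fun i _ => (bw_pos (hq0 _) (hq1 _) _).le))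
  calc ∑ x ∈ S, ∏ i : Finset.Icc k l, (bw (r i) (x i) ^ 2 / bw (q i) (x i))
      ≤ ∑ x : ((i : Finset.Icc k l) → Bool),
          ∏ i : Finset.Icc k l, (bw (r i) (x i) ^ 2 / bw (q i) (x i)) :=
        Finset.sum_le_sum_of_subset_of_nonneg (Finset.subset_univ _)
          (fun x _ _ => Finset.prod_nonneg fun i _ =>
            div_nonneg (sq_nonneg _) (bw_pos (hq0 _) (hq1 _) _).le)
    _ = ∏ i ∈ Finset.Icc k l,
          (bw (r i) true ^ 2 / bw (q i) true + bw (r i) false ^ 2 / bw (q i) false) :=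
        sum_prod_bits _ (fun i b => bw (r i) b ^ 2 / bw (q i) b)
    _ ≤ ∏ i ∈ Finset.Icc k l, Real.exp ((q i - r i) ^ 2 / p ^ 2) := by
        refine Finset.prod_le_prod (fun i _ => ?_) (fun i _ => ?_)
        · exact add_nonneg (div_nonneg (sq_nonneg _) (bw_pos (hq0 _) (hq1 _) _).le)
            (div_nonneg (sq_nonneg _) (bw_pos (hq0 _) (hq1 _) _).le)
        · have e : bw (r i) true ^ 2 / bw (q i) true + bw (r i) false ^ 2 / bw (q i) false
              = (q i - r i) ^ 2 / (q i * (1 - q i)) + 1 := by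
            have h1 := (hq0 i).ne'
            have h2 : 1 - q i ≠ 0 := by linarith [hq1 i]
            simp only [bw, if_true, Bool.false_eq_true, if_false]
            field_simp
            ring
          rw [e]
          refine le_trans ?_ (Real.add_one_le_exp _)
          have : p ^ 2 ≤ q i * (1 - q i) := by
            rw [sq]
            exact mul_le_mul (hq i).1.le (by linarith [(hq i).2]) hp0.le (hq0 i).le
          gcongr
    _ = Real.exp ((∑ i ∈ Finset.Icc k l, (q i - r i) ^ 2) / p ^ 2) := by
        rw [← Real.exp_sum, Finset.sum_div]
    _ ≤ _ := by
        gcongr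
        exact hs.sum_le_tsum _ (fun i _ => sq_nonneg _)

lemma ac_of_summable {q r : ℤ → ℝ} {μ ν : Measure Xspace} (hμ : IsProductMeasure q μ)
    (hν : IsProductMeasure r ν) {p : ℝ} (hp0 : 0 < p)
    (hq : ∀ k, p < q k ∧ q k < 1 - p) (hr : ∀ k, p < r k ∧ r k < 1 - p)
    (hs : Summable (fun k => (q k - r k) ^ 2)) : ν ≪ μ := by
  classical
  have := hμ.1
  have := hν.1
  set K := Real.exp ((∑' k, (q k - r k) ^ 2) / p ^ 2) with hK
  have hK0 : 0 < K := Real.exp_pos _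
  have key : ∀ t ∈ measurableCylinders (fun _ : ℤ => Bool), (ν.real t) ^ 2 ≤ K * μ.real t := by
    intro t ht
    obtain ⟨s, S, -, rfl⟩ := (mem_measurableCylinders t).1 ht
    obtain ⟨n, hn⟩ := finset_sub_Icc s
    have e : cylinder s S = (Finset.Icc (-(n : ℤ)) n).restrict (π := fun _ => Bool) ⁻¹'
        (((Set.toFinite (Finset.restrict₂ (π := fun _ => Bool) hn ⁻¹' S)).toFinset :
          Finset _) : Set _) := by
      rw [Set.Finite.coe_toFinset]; rfl
    rw [e]
    exact cyl_bound hμ hν hp0 hq hr hs _ _ _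
  refine Measure.AbsolutelyContinuous.mk fun A hA hA0 => ?_
  by_contra hne
  have ha : 0 < ν.real A := by
    rw [measureReal_def]; exact ENNReal.toReal_pos hne (measure_ne_top _ _)
  have hA0' : μ.real A = 0 := by rw [measureReal_def, hA0]; rfl
  have ap : ∀ ε : ℝ, 0 < ε → ν.real A ≤ √(K * ε) + ε := by
    intro ε hε
    obtain ⟨t, ht, hlt⟩ := exists_measure_symmDiff_lt_of_generateFrom_isSetRing (μ := μ + ν)
      (isSetRing_measurableCylinders (α := fun _ : ℤ => Bool))
      ⟨{Set.univ}, by simp, Set.singleton_subset_iff.2 (univ_mem_measurableCylinders _), by simp⟩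
      generateFrom_measurableCylinders.symm hA (ENNReal.ofReal_pos.2 hε)
    have h1 : (μ + ν).real (symmDiff t A) < ε := by
      rw [measureReal_def]
      exact (ENNReal.lt_ofReal_iff_toReal_lt (measure_ne_top _ _)).1 hlt
    rw [measureReal_add_apply] at h1
    have h2 : μ.real t ≤ μ.real A + μ.real (symmDiff t A) := by
      refine (measureReal_mono ?_).trans (measureReal_union_le _ _)
      intro x hx
      by_cases hxA : x ∈ A
      · exact Or.inl hxA
      · exact Or.inr (Or.inl ⟨hx, hxA⟩)
    have h3 : ν.real A ≤ ν.real t + ν.real (symmDiff t A) := by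
      refine (measureReal_mono ?_).trans (measureReal_union_le _ _)
      intro x hx
      by_cases hxA : x ∈ t
      · exact Or.inl hxA
      · exact Or.inr (Or.inr ⟨hx, hxA⟩)
    have h4 : 0 ≤ μ.real (symmDiff t A) := measureReal_nonneg
    have h5 : 0 ≤ ν.real (symmDiff t A) := measureReal_nonneg
    have h6 : ν.real t ≤ √(K * ε) := by
      refine Real.le_sqrt_of_sq_le ((key t ht).trans ?_)
      gcongr; linarith
    linarith
  have lim : Tendsto (fun ε : ℝ => √(K * ε) + ε) (𝓝[>] 0) (𝓝 0) := by
    have : Continuous (fun ε : ℝ => √(K * ε) + ε) := by fun_prop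
    have h := (this.tendsto 0).mono_left (nhdsWithin_le_nhds (s := Set.Ioi 0))
    simpa using h
  have := ge_of_tendsto lim (by filter_upwards [self_mem_nhdsWithin] with ε hε using ap ε hε)
  linarith

lemma hell_bound {a b : ℝ} (ha0 : 0 < a) (ha1 : a < 1) (hb0 : 0 < b) (hb1 : b < 1) :
    √(a * b) + √((1 - a) * (1 - b)) ≤ Real.exp (-((a - b) ^ 2 / 8)) := by
  refine le_trans ?_ (Real.add_one_le_exp _)
  rw [Real.sqrt_mul ha0.le, Real.sqrt_mul (by linarith : (0:ℝ) ≤ 1 - a)]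
  have e1 := Real.sq_sqrt ha0.le
  have e2 := Real.sq_sqrt hb0.le
  have e3 := Real.sq_sqrt (by linarith : (0:ℝ) ≤ 1 - a)
  have e4 := Real.sq_sqrt (by linarith : (0:ℝ) ≤ 1 - b)
  have n1 := Real.sqrt_nonneg a
  have n2 := Real.sqrt_nonneg b
  have l1 : √a ≤ 1 := Real.sqrt_le_one.2 ha1.le
  have l2 : √b ≤ 1 := Real.sqrt_le_one.2 hb1.le
  have h : (a - b) ^ 2 ≤ 4 * (√a - √b) ^ 2 := by
    have : a - b = (√a - √b) * (√a + √b) := by rw [← sub_eq_zero]; linear_combination e2 - e1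
    rw [this, mul_pow, mul_comm]
    gcongr
    nlinarith
  nlinarith [sq_nonneg (√(1 - a) - √(1 - b))]

lemma sep_set {q r : ℤ → ℝ} {μ ν : Measure Xspace} (hμ : IsProductMeasure q μ)
    (hν : IsProductMeasure r ν)
    (hq0 : ∀ k, 0 < q k) (hq1 : ∀ k, q k < 1) (hr0 : ∀ k, 0 < r k) (hr1 : ∀ k, r k < 1)
    (k l : ℤ) : ∃ A : Set Xspace,
      μ.real A ≤ Real.exp (-((∑ i ∈ Finset.Icc k l, (q i - r i) ^ 2) / 8)) ∧
      ν.real Aᶜ ≤ Real.exp (-((∑ i ∈ Finset.Icc k l, (q i - r i) ^ 2) / 8)) := by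
  classical
  let f : ((i : Finset.Icc k l) → Bool) → ℝ := fun x => ∏ i : Finset.Icc k l, bw (q i) (x i)
  let g : ((i : Finset.Icc k l) → Bool) → ℝ := fun x => ∏ i : Finset.Icc k l, bw (r i) (x i)
  have hf : ∀ x, 0 ≤ f x := fun x => Finset.prod_nonneg fun i _ => (bw_pos (hq0 _) (hq1 _) _).le
  have hg : ∀ x, 0 ≤ g x := fun x => Finset.prod_nonneg fun i _ => (bw_pos (hr0 _) (hr1 _) _).le
  have tot : ∑ x, √(f x * g x) ≤
      Real.exp (-((∑ i ∈ Finset.Icc k l, (q i - r i) ^ 2) / 8)) := by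
    calc ∑ x, √(f x * g x)
        = ∑ x : ((i : Finset.Icc k l) → Bool),
            ∏ i : Finset.Icc k l, √(bw (q i) (x i) * bw (r i) (x i)) := by
          refine Finset.sum_congr rfl fun x _ => ?_
          rw [← Finset.prod_mul_distrib, Real.sqrt_prod]
          exact fun i _ => mul_nonneg (bw_pos (hq0 _) (hq1 _) _).le (bw_pos (hr0 _) (hr1 _) _).le
      _ = ∏ i ∈ Finset.Icc k l, (√(bw (q i) true * bw (r i) true)
            + √(bw (q i) false * bw (r i) false)) :=
          sum_prod_bits _ (fun i b => √(bw (q i) b * bw (r i) b))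
      _ ≤ ∏ i ∈ Finset.Icc k l, Real.exp (-((q i - r i) ^ 2 / 8)) := by
          refine Finset.prod_le_prod (fun i _ => by positivity) (fun i _ => ?_)
          exact hell_bound (hq0 i) (hq1 i) (hr0 i) (hr1 i)
      _ = _ := by
          rw [← Real.exp_sum, Finset.sum_neg_distrib, Finset.sum_div]
  let S : Finset ((i : Finset.Icc k l) → Bool) := Finset.univ.filter fun x => f x ≤ g x
  refine ⟨(Finset.Icc k l).restrict (π := fun _ => Bool) ⁻¹' (S : Set ((i : Finset.Icc k l) → Bool)), ?_, ?_⟩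
  · rw [prodMeas_real hμ (fun k => (hq0 k).le) (fun k => (hq1 k).le)]
    refine le_trans ?_ tot
    refine le_trans (Finset.sum_le_sum (g := fun x => √(f x * g x)) fun x hx => ?_)
      (Finset.sum_le_sum_of_subset_of_nonneg (Finset.subset_univ _)
        (fun _ _ _ => Real.sqrt_nonneg _))
    have : f x ≤ g x := (Finset.mem_filter.1 hx).2
    refine Real.le_sqrt_of_sq_le ?_
    change f x ^ 2 ≤ _
    nlinarith [hf x]
  · rw [← Set.preimage_compl, ← Finset.coe_compl,
      prodMeas_real hν (fun k => (hr0 k).le) (fun k => (hr1 k).le)]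
    refine le_trans ?_ tot
    refine le_trans (Finset.sum_le_sum (g := fun x => √(f x * g x)) fun x hx => ?_)
      (Finset.sum_le_sum_of_subset_of_nonneg (Finset.subset_univ _)
        (fun _ _ _ => Real.sqrt_nonneg _))
    have : g x < f x := by
      have h := Finset.mem_compl.1 hx
      simpa [S] using h
    refine Real.le_sqrt_of_sq_le ?_
    change g x ^ 2 ≤ _
    nlinarith [hg x]

lemma summable_of_ac {q r : ℤ → ℝ} {μ ν : Measure Xspace} (hμ : IsProductMeasure q μ)
    (hν : IsProductMeasure r ν)
    (hq0 : ∀ k, 0 < q k) (hq1 : ∀ k, q k < 1) (hr0 : ∀ k, 0 < r k) (hr1 : ∀ k, r k < 1)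
    (hac : ν ≪ μ) : Summable (fun k => (q k - r k) ^ 2) := by
  have := hμ.1
  have := hν.1
  by_contra hns
  have big : ∀ C : ℝ, ∃ n : ℕ, C < ∑ i ∈ Finset.Icc (-(n : ℤ)) n, (q i - r i) ^ 2 := by
    intro C
    by_contra! hC
    refine hns (summable_of_sum_le (c := C) (fun i => sq_nonneg _) fun s => ?_)
    obtain ⟨n, hn⟩ := finset_sub_Icc s
    exact (Finset.sum_le_sum_of_subset_of_nonneg hn fun i _ _ => sq_nonneg _).trans (hC n)
  have sets : ∀ n : ℕ, ∃ A : Set Xspace, μ A ≤ ENNReal.ofReal ((1 / 2) ^ n) ∧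
      ν Aᶜ ≤ ENNReal.ofReal ((1 / 2) ^ n) := by
    intro n
    obtain ⟨m, hm⟩ := big (-8 * Real.log ((1 / 2) ^ n))
    obtain ⟨A, h1, h2⟩ := sep_set hμ hν hq0 hq1 hr0 hr1 (-(m : ℤ)) m
    have : Real.exp (-((∑ i ∈ Finset.Icc (-(m : ℤ)) m, (q i - r i) ^ 2) / 8))
        ≤ (1 / 2) ^ n := by
      rw [← Real.le_log_iff_exp_le (by positivity)]
      linarith
    refine ⟨A, ?_, ?_⟩
    · rw [← ofReal_measureReal]; exact ENNReal.ofReal_le_ofReal (h1.trans this)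
    · rw [← ofReal_measureReal]; exact ENNReal.ofReal_le_ofReal (h2.trans this)
  choose A hA1 hA2 using sets
  have fin : ∑' n : ℕ, ENNReal.ofReal ((1 / 2) ^ n) ≠ ⊤ :=
    (summable_geometric_two).tsum_ofReal_ne_top
  have a1 := hac.ae_le (ae_eventually_notMem (μ := μ) (s := A)
    (ne_top_of_le_ne_top fin (ENNReal.tsum_le_tsum hA1)))
  have a2 := ae_eventually_notMem (μ := ν) (s := fun n => (A n)ᶜ)
    (ne_top_of_le_ne_top fin (ENNReal.tsum_le_tsum hA2))
  have : ∀ᵐ x ∂ν, False := by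
    filter_upwards [a1, a2] with x h1 h2
    obtain ⟨n, h1, h2⟩ := (h1.and h2).exists
    exact h2 h1
  simp only [ae_iff, not_false_eq_true, Set.setOf_true, measure_univ] at this
  exact one_ne_zero this

lemma shifted_product {q : ℤ → ℝ} {P : Measure Xspace} (hP : IsProductMeasure q P) :
    IsProductMeasure (fun k => q (k - 1)) (Measure.map shiftInv P) := by
  have := hP.1
  have hm : Measurable shiftInv := measurable_pi_lambda _ fun i => measurable_pi_apply _
  refine ⟨Measure.isProbabilityMeasure_map hm.aemeasurable, fun k l b => ?_⟩
  have hms : MeasurableSet {w : Xspace | ∀ i ∈ Finset.Icc k l, w i = b i} := by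
    have : {w : Xspace | ∀ i ∈ Finset.Icc k l, w i = b i} =
        ⋂ i ∈ Finset.Icc k l, (fun w : Xspace => w i) ⁻¹' {b i} := by
      ext w; simp
    rw [this]
    exact Finset.measurableSet_biInter _ fun i _ =>
      (measurable_pi_apply i) (measurableSet_singleton _)
  rw [Measure.map_apply hm hms]
  have e : shiftInv ⁻¹' {w : Xspace | ∀ i ∈ Finset.Icc k l, w i = b i} =
      {w : Xspace | ∀ i ∈ Finset.Icc (k - 1) (l - 1), w i = (fun j => b (j + 1)) i} := by
    ext w
    simp only [Set.mem_preimage, Set.mem_setOf_eq, shiftInv, Finset.mem_Icc]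
    constructor
    · intro h i hi
      have := h (i + 1) (by omega)
      simpa using this
    · intro h i hi
      have := h (i - 1) (by omega)
      simpa using this
  rw [e, hP.2]
  refine Finset.prod_bij' (fun i _ => i + 1) (fun i _ => i - 1) ?_ ?_ ?_ ?_ ?_
  · intro i hi; simp only [Finset.mem_Icc] at *; omega
  · intro i hi; simp only [Finset.mem_Icc] at *; omega
  · intro i _; simp
  · intro i _; simp
  · intro i _; simp

/-- For a product measure with coordinate probabilities uniformly bounded away
from `0` and `1`, the shift is nonsingular iff `∑_k (P_k({0}) - P_{k-1}({0}))² < ∞`. -/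
theorem shift_nonsingular_iff_kakutani (q : ℤ → ℝ) (P : Measure Xspace)
    (hP : IsProductMeasure q P)
    (p : ℝ) (hp0 : 0 < p) (hp1 : p < 1) (hq : ∀ k : ℤ, p < q k ∧ q k < 1 - p) :
    ShiftNonsingular P ↔ Summable (fun k : ℤ => ((1 - q k) - (1 - q (k - 1))) ^ 2) := by
  have hS := shifted_product hP
  have e : (fun k : ℤ => ((1 - q k) - (1 - q (k - 1))) ^ 2) =
      fun k => (q k - q (k - 1)) ^ 2 := by funext k; ring
  have e' : (fun k : ℤ => ((1 - q k) - (1 - q (k - 1))) ^ 2) =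
      fun k => (q (k - 1) - q k) ^ 2 := by funext k; ring
  have hq0 : ∀ k, 0 < q k := fun k => hp0.trans (hq k).1
  have hq1 : ∀ k, q k < 1 := fun k => by linarith [(hq k).2]
  constructor
  · intro h
    rw [e]
    exact summable_of_ac hP hS hq0 hq1 (fun k => hq0 _) (fun k => hq1 _) h.1
  · intro h
    exact ⟨ac_of_summable hP hS hp0 hq (fun k => hq _) (e ▸ h),
      ac_of_summable hS hP hp0 (fun k => hq _) hq (e' ▸ h)⟩
end
end

section
/- If in addition the shift T is nonsingular with respect to P, then for every n ∈ ℕ and P-almost every w ∈ 𝕏, the Radon–Nikodym derivative satisfies (Tⁿ)'(w) = ∏_{k∈ℤ} P_{k−n}({w_k}) / P_k({w_k}), the infinite product converging. -/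
open MeasureTheory Filter Topology

noncomputable section

lemma shiftInv_iter (n : ℕ) (w : Xspace) : shiftInv^[n] w = fun i => w (i - n) := by
  induction n generalizing w with
  | zero => simp
  | succ k ih =>
    rw [Function.iterate_succ_apply, ih]
    funext i
    simp only [shiftInv]
    congr 1
    push_cast
    ring

lemma measurable_shiftInv : Measurable shiftInv := by
  unfold shiftInv
  fun_prop

lemma map_iter_ac (P : Measure Xspace) (h : Measure.map shiftInv P ≪ P) (n : ℕ) :
    Measure.map (shiftInv^[n]) P ≪ P := by
  induction n with
  | zero => simp [Measure.AbsolutelyContinuous.refl]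
  | succ k ih =>
    rw [Function.iterate_succ', ← Measure.map_map measurable_shiftInv
      (measurable_shiftInv.iterate k)]
    exact (ih.map measurable_shiftInv).trans h

lemma cyl_map (q : ℤ → ℝ) (P : Measure Xspace) (hP : IsProductMeasure q P) (n : ℕ)
    (k l : ℤ) (b : ℤ → Bool) :
    Measure.map (shiftInv^[n]) P {w : Xspace | ∀ i ∈ Finset.Icc k l, w i = b i}
      = ∏ i ∈ Finset.Icc k l, ENNReal.ofReal (if b i then q (i - n) else 1 - q (i - n)) := by
  have hm : MeasurableSet {w : Xspace | ∀ i ∈ Finset.Icc k l, w i = b i} := by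
    have : {w : Xspace | ∀ i ∈ Finset.Icc k l, w i = b i}
        = ⋂ i ∈ Finset.Icc k l, (fun w : Xspace => w i) ⁻¹' {b i} := by
      ext w; simp
    rw [this]
    exact Finset.measurableSet_biInter _ fun i _ =>
      measurable_pi_apply i (measurableSet_singleton _)
  rw [Measure.map_apply (measurable_shiftInv.iterate n) hm]
  have e : shiftInv^[n] ⁻¹' {w : Xspace | ∀ i ∈ Finset.Icc k l, w i = b i}
      = {w : Xspace | ∀ i ∈ Finset.Icc (k - n) (l - n), w i = (fun j => b (j + n)) i} := by
    ext w
    simp only [Set.mem_preimage, Set.mem_setOf_eq, shiftInv_iter, Finset.mem_Icc]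
    constructor
    · intro h i hi
      have := h (i + n) ⟨by linarith [hi.1], by linarith [hi.2]⟩
      simpa using this
    · intro h i hi
      have := h (i - n) ⟨by linarith [hi.1], by linarith [hi.2]⟩
      simpa using this
  rw [e, hP.2]
  refine Finset.prod_bij' (fun i _ => i + n) (fun i _ => i - n) ?_ ?_ ?_ ?_ ?_
  · intro i hi; simp only [Finset.mem_Icc] at *; omega
  · intro i hi; simp only [Finset.mem_Icc] at *; omega
  · intro i hi; simp
  · intro i hi; simp
  · intro i hi; simp

/-- restriction to the window -/
def win (m : ℕ) : Xspace → (Finset.Icc (-(m : ℤ)) (m : ℤ) → Bool) :=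
  (Finset.Icc (-(m : ℤ)) (m : ℤ)).restrict

lemma measurable_win (m : ℕ) : Measurable (win m) := Finset.measurable_restrict _

/-- the window filtration -/
def winFil : Filtration ℕ (inferInstance : MeasurableSpace Xspace) where
  seq m := MeasurableSpace.comap (win m) inferInstance
  mono' := by
    intro a b hab
    have hs : Finset.Icc (-(a : ℤ)) (a : ℤ) ⊆ Finset.Icc (-(b : ℤ)) (b : ℤ) :=
      Finset.Icc_subset_Icc (by omega) (by omega)
    have : win a = Finset.restrict₂ (π := fun _ => Bool) hs ∘ win b := rfl
    simp only
    rw [this, ← MeasurableSpace.comap_comp]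
    exact MeasurableSpace.comap_mono (Finset.measurable_restrict₂ hs).comap_le
  le' m := (measurable_win m).comap_le

lemma iSup_winFil : (inferInstance : MeasurableSpace Xspace) ≤ ⨆ m, winFil m := by
  refine iSup_le fun i => ?_
  refine le_trans ?_ (le_iSup (fun m => winFil m) i.natAbs)
  have hi : i ∈ Finset.Icc (-(i.natAbs : ℤ)) (i.natAbs : ℤ) := by
    simp only [Finset.mem_Icc]; omega
  have : (fun w : Xspace => w i) = (fun v => v ⟨i, hi⟩) ∘ win i.natAbs := rfl
  show MeasurableSpace.comap (fun w : Xspace => w i) _ ≤ MeasurableSpace.comap (win _) _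
  rw [this, ← MeasurableSpace.comap_comp]
  exact MeasurableSpace.comap_mono (measurable_pi_apply _).comap_le

/-- the finite density on a window -/
def dens (q : ℤ → ℝ) (n m : ℕ) (v : Finset.Icc (-(m : ℤ)) (m : ℤ) → Bool) : ℝ :=
  ∏ k, (if v k then q ((k : ℤ) - n) else 1 - q ((k : ℤ) - n)) / (if v k then q k else 1 - q k)

lemma win_fiber (m : ℕ) (v : Finset.Icc (-(m : ℤ)) (m : ℤ) → Bool) :
    win m ⁻¹' {v} = {w : Xspace | ∀ i ∈ Finset.Icc (-(m : ℤ)) (m : ℤ),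
      w i = (fun j => if h : j ∈ Finset.Icc (-(m : ℤ)) (m : ℤ) then v ⟨j, h⟩ else true) i} := by
  ext w
  simp only [Set.mem_preimage, Set.mem_singleton_iff, Set.mem_setOf_eq, funext_iff]
  constructor
  · intro h i hi
    rw [dif_pos hi]
    exact h ⟨i, hi⟩
  · rintro h ⟨i, hi⟩
    have := h i hi
    rw [dif_pos hi] at this
    exact this

lemma map_win (q : ℤ → ℝ) (P : Measure Xspace) (hP : IsProductMeasure q P)
    (hq : ∀ k, 0 < q k ∧ q k < 1) (n m : ℕ) :
    (Measure.map (shiftInv^[n]) P).map (win m)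
      = (P.map (win m)).withDensity (fun v => ENNReal.ofReal (dens q n m v)) := by
  refine Measure.ext_of_singleton fun v => ?_
  rw [withDensity_apply _ (measurableSet_singleton _), Measure.map_apply (measurable_win m)
    (measurableSet_singleton _), lintegral_singleton, Measure.map_apply (measurable_win m)
    (measurableSet_singleton _), win_fiber, cyl_map q P hP, hP.2, ← Finset.prod_coe_sort,
    ← Finset.prod_coe_sort (Finset.Icc (-(m : ℤ)) (m : ℤ))]
  have h1 : ∀ (k : ℤ) (c : Bool), 0 < (if c then q k else 1 - q k) := by
    intro k c
    have := hq k
    cases c <;> simp <;> linarith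
  unfold dens
  rw [ENNReal.ofReal_prod_of_nonneg (fun i _ => (div_pos (h1 _ _) (h1 _ _)).le),
    ← Finset.prod_mul_distrib]
  refine Finset.prod_congr rfl fun i _ => ?_
  rw [← ENNReal.ofReal_mul (div_pos (h1 _ _) (h1 _ _)).le]
  simp only [i.2, dite_true]
  rw [div_mul_cancel₀ _ (h1 _ _).ne']

theorem rnDeriv_eq_infinite_product (q : ℤ → ℝ) (P : Measure Xspace)
    (hP : IsProductMeasure q P)
    (p : ℝ) (hp0 : 0 < p) (hp1 : p < 1) (hq : ∀ k : ℤ, p < q k ∧ q k < 1 - p)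
    (hNS : ShiftNonsingular P) :
    ∀ n : ℕ, ∀ᵐ w ∂P,
      Tendsto (fun m : ℕ => ∏ k ∈ Finset.Icc (-(m : ℤ)) (m : ℤ),
          (if w k then q (k - n) else 1 - q (k - n)) / (if w k then q k else 1 - q k))
        atTop (nhds ((rnD P n w).toReal)) := by
  intro n
  haveI := hP.1
  have hq' : ∀ k, 0 < q k ∧ q k < 1 := fun k => ⟨by linarith [hq k], by linarith [hq k]⟩
  have hac := map_iter_ac P hNS.1 n
  haveI : IsProbabilityMeasure (Measure.map (shiftInv^[n]) P) :=
    Measure.isProbabilityMeasure_map (measurable_shiftInv.iterate n).aemeasurable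
  have hint : Integrable (fun w => (rnD P n w).toReal) P := Measure.integrable_toReal_rnDeriv
  have hmeas : StronglyMeasurable[⨆ m, winFil m] (fun w => (rnD P n w).toReal) := by
    have h0 : Measurable (fun w => (rnD P n w).toReal) :=
      (Measure.measurable_rnDeriv _ _).ennreal_toReal
    exact (h0.mono iSup_winFil le_rfl).stronglyMeasurable
  have key : ∀ m, (fun w => dens q n m (win m w))
      =ᵐ[P] P[fun w => (rnD P n w).toReal | winFil m] := by
    intro m
    have hdn : ∀ v, 0 ≤ dens q n m v := by
      intro v
      refine Finset.prod_nonneg fun i _ => div_nonneg ?_ ?_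
      · have := hq' (i - n); split_ifs <;> linarith
      · have := hq' i; split_ifs <;> linarith
    have hdm : Measurable (dens q n m) := measurable_of_countable _
    have hi : Integrable (fun w => dens q n m (win m w)) P := by
      have : Integrable (dens q n m) (P.map (win m)) := by
        haveI : IsProbabilityMeasure (P.map (win m)) :=
          Measure.isProbabilityMeasure_map (measurable_win m).aemeasurable
        exact Integrable.of_finite
      exact this.comp_measurable (measurable_win m)
    refine ae_eq_condExp_of_forall_setIntegral_eq (winFil.le m) hint
      (fun s _ _ => hi.integrableOn) ?_ ?_
    · rintro s ⟨A, hA, rfl⟩ -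
      rw [integral_eq_lintegral_of_nonneg_ae (Eventually.of_forall fun w => hdn _)
        hi.aestronglyMeasurable.restrict, ← setLIntegral_map hA hdm.ennreal_ofReal
        (measurable_win m), ← withDensity_apply _ hA, ← map_win q P hP hq',
        Measure.map_apply (measurable_win m) hA]
      exact (Measure.setIntegral_toReal_rnDeriv hac _).symm
    · have : Measurable[winFil m] (fun w => dens q n m (win m w)) :=
        hdm.comp (comap_measurable (win m))
      exact this.stronglyMeasurable.aestronglyMeasurable
  filter_upwards [hint.tendsto_ae_condExp hmeas, ae_all_iff.2 key] with w hw hk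
  refine hw.congr fun m => ?_
  rw [← hk m, ← Finset.prod_coe_sort]
  rfl
end
end

section
/- With the choice of k_t and λ_t in the construction (λ_t = exp(2^{-k_t}), k_t = ⌊log₂(M_{t-1}/ε_t)⌋ + 1), for every n ∈ ℕ and every w ∈ 𝕏 one has e^{-∑_{u=t(n)+1}^{∞} ε_u} ≤ ∏_{k=-∞}^{-N_{t(n)}} P_{k−n}({w_k}) / P_k({w_k}) ≤ e^{∑_{u=t(n)+1}^{∞} ε_u}, and moreover ∏_{k=n}^{∞} P_{k−n}({w_k}) / P_k({w_k}) = 1; in particular the tail product ∏_{k=-∞}^{-N_{t(n)}} P_{k−n}({w_k}) / P_k({w_k}) tends to 1 uniformly in w as n → ∞. -/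
open MeasureTheory Filter Topology

noncomputable section

namespace KosloffAux

variable (D : KosloffData)

lemma N_le_M {t : ℕ} (ht : 1 ≤ t) : 3 * D.N t ≤ D.M t := by
  rw [D.M_def t ht, D.m_def t ht]
  nlinarith [Nat.zero_le (D.N t * 2 ^ (3 * D.N t))]

lemma M_lt_N (t : ℕ) : D.M t < D.N (t + 1) := by
  have h1 := D.N_def (t + 1) (by omega)
  have h2 := D.nn_pos (t + 1) (by omega)
  simp only [Nat.add_sub_cancel] at h1
  omega

lemma M_lt_succ (t : ℕ) : D.M t < D.M (t + 1) := by
  have h1 := M_lt_N D t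
  have h2 := N_le_M D (t := t + 1) (by omega)
  omega

lemma M_strictMono : StrictMono D.M := strictMono_nat_of_lt_succ (M_lt_succ D)

lemma lt_M (t : ℕ) : t < D.M t := by
  induction t with
  | zero => rw [D.M_zero]; omega
  | succ k ih => have := M_lt_succ D k; omega

lemma N_mono {s t : ℕ} (hs : 1 ≤ s) (hst : s ≤ t) : D.N s ≤ D.N t := by
  rcases hst.eq_or_lt with h | h
  · rw [h]
  · obtain ⟨r, rfl⟩ : ∃ r, t = r + 1 := ⟨t - 1, by omega⟩
    have h1 := N_le_M D hs
    have h2 := (M_strictMono D).monotone (show s ≤ r by omega)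
    have h3 := M_lt_N D r
    omega

lemma tOf_spec (n : ℕ) : 1 ≤ tOf D n ∧ n < D.N (tOf D n) := by
  have : (tOf D n) ∈ {t : ℕ | 1 ≤ t ∧ n < D.N t} := by
    apply Nat.sInf_mem
    refine ⟨n + 1, by omega, ?_⟩
    have h1 := lt_M D n
    have h2 := M_lt_N D n
    omega
  exact this

/-- exponent -/
def xx (u : ℕ) : ℝ := (2 : ℝ) ^ (-(⌊Real.logb 2 ((D.M (u - 1) : ℝ) / D.eps u)⌋ + 1))

lemma xx_pos (u : ℕ) : 0 < xx D u := by unfold xx; positivity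

lemma xx_le (u : ℕ) (hu : 1 ≤ u) : xx D u * D.M (u - 1) ≤ D.eps u := by
  have hM : (0 : ℝ) < D.M (u - 1) := by
    have := lt_M D (u - 1)
    exact_mod_cast (by omega : 0 < D.M (u - 1))
  have he := D.eps_pos u hu
  have hq : 0 < (D.M (u - 1) : ℝ) / D.eps u := by positivity
  have h2 : xx D u ≤ D.eps u / D.M (u - 1) := by
    unfold xx
    rw [← Real.rpow_intCast]
    calc (2 : ℝ) ^ (((-(⌊Real.logb 2 ((D.M (u - 1) : ℝ) / D.eps u)⌋ + 1) : ℤ)) : ℝ)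
        ≤ (2 : ℝ) ^ (-(Real.logb 2 ((D.M (u - 1) : ℝ) / D.eps u))) := by
          apply Real.rpow_le_rpow_of_exponent_le (by norm_num)
          push_cast
          linarith [Int.lt_floor_add_one (Real.logb 2 ((D.M (u - 1) : ℝ) / D.eps u))]
      _ = D.eps u / D.M (u - 1) := by
          rw [Real.rpow_neg (by norm_num), Real.rpow_logb (by norm_num) (by norm_num) hq, inv_div]
  rwa [le_div_iff₀ hM] at h2

/-- log weight -/
def cc (u : ℕ) (b : Bool) : ℝ := Real.log (2 * coordWt (1 / (1 + D.lam u)) b)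

lemma lam_eq {u : ℕ} (hu : 1 ≤ u) : D.lam u = Real.exp (xx D u) := D.lam_def u hu

lemma cw_pos {u : ℕ} (hu : 1 ≤ u) (b : Bool) : 0 < coordWt (1 / (1 + D.lam u)) b := by
  have h : 0 < D.lam u := by rw [lam_eq D hu]; positivity
  cases b
  · simp [coordWt]; positivity
  · have : 1 - 1 / (1 + D.lam u) = D.lam u / (1 + D.lam u) := by field_simp; ring
    simp only [coordWt, if_true, this]; positivity

lemma cw_eq {u : ℕ} (hu : 1 ≤ u) (b : Bool) :
    coordWt (1 / (1 + D.lam u)) b = 1 / 2 * Real.exp (cc D u b) := by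
  have := cw_pos D hu b
  rw [cc, Real.exp_log (by positivity)]; ring

lemma cc_abs {u : ℕ} (hu : 1 ≤ u) (b : Bool) : |cc D u b| ≤ xx D u := by
  have hx := xx_pos D u
  have h1 : 1 < Real.exp (xx D u) := by simpa using hx
  have hp := cw_pos D hu b
  have hl := lam_eq D hu
  rw [abs_le, cc]
  rw [Real.le_log_iff_exp_le (by positivity), Real.log_le_iff_le_exp (by positivity), Real.exp_neg]
  rw [← hl] at h1 ⊢
  have h0 : 0 < D.lam u := by linarith
  cases b
  · simp only [coordWt]
    constructor
    · rw [inv_le_iff_one_le_mul₀ h0]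
      simp
      field_simp; linarith
    · simp
      field_simp; nlinarith
  · have : 1 - 1 / (1 + D.lam u) = D.lam u / (1 + D.lam u) := by field_simp; ring
    simp only [coordWt, if_true, this]
    constructor
    · rw [inv_le_iff_one_le_mul₀ h0]
      field_simp; nlinarith
    · field_simp; nlinarith

/-- block indicator -/
def ind (u : ℕ) (j : ℤ) : ℝ := if -(D.N u : ℤ) < j ∧ j ≤ -(D.M (u - 1) : ℤ) then 1 else 0

lemma cw_formula {p : ℤ → ℝ} {P : Measure Xspace} (hP : IsKosloffMeasure D p P)
    {t : ℕ} (ht : 1 ≤ t) (b : Bool) (U : ℕ) (hU : t ≤ U) : ∀ j : ℤ, -(D.M U : ℤ) < j →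
    j ≤ -(D.N t : ℤ) →
    coordWt (p j) b = 1 / 2 * Real.exp (∑ u ∈ Finset.Ioc t U, ind D u j * cc D u b) := by
  obtain ⟨-, -, h2, h3, -⟩ := hP
  have half : coordWt (1 / 2) b = 1 / 2 := by cases b <;> simp [coordWt]; norm_num
  induction U, hU using Nat.le_induction with
  | base =>
    intro j hj hj'
    rw [h3 t ht j hj hj', half]; simp
  | succ U hU ih =>
    intro j hj hj'
    have e : Finset.Ioc t (U + 1) = insert (U + 1) (Finset.Ioc t U) := by
      ext; simp; omega
    rw [e, Finset.sum_insert (by simp)]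
    by_cases hc : -(D.M U : ℤ) < j
    · have : ind D (U + 1) j = 0 := by
        unfold ind; rw [if_neg]; simp; omega
      rw [this, zero_mul, zero_add]
      exact ih j hc hj'
    · have hz : ∑ u ∈ Finset.Ioc t U, ind D u j * cc D u b = 0 := by
        apply Finset.sum_eq_zero
        intro u hu
        rw [Finset.mem_Ioc] at hu
        have a1 := N_le_M D (t := u) (by omega)
        have a2 := (M_strictMono D).monotone hu.2
        have : ind D u j = 0 := by
          unfold ind; rw [if_neg]; rintro ⟨q, -⟩; omega
        rw [this, zero_mul]
      rw [hz, add_zero]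
      by_cases hd : -(D.N (U + 1) : ℤ) < j
      · have : ind D (U + 1) j = 1 := by
          unfold ind; rw [if_pos]; exact ⟨hd, by simp; omega⟩
        rw [this, one_mul, ← cw_eq D (by omega) b,
          h2 (U + 1) (by omega) j hd (by simp; omega)]
      · have : ind D (U + 1) j = 0 := by
          unfold ind; rw [if_neg]; tauto
        rw [this, h3 (U + 1) (by omega) j hj (by omega), half]; simp

lemma ind_sum (u n : ℕ) (S : Finset ℤ) : ∑ k ∈ S, |ind D u (k - n) - ind D u k| ≤ 2 * n := by
  have key : ∀ a : ℤ, ∑ k ∈ S, (if k ∈ Finset.Ioc a (a + n) then (1 : ℝ) else 0) ≤ n := by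
    intro a
    rw [Finset.sum_boole]
    have : (S.filter (fun k => k ∈ Finset.Ioc a (a + n))).card ≤ (Finset.Ioc a (a + n)).card :=
      Finset.card_le_card (by intro k; simp)
    simp only [Int.card_Ioc] at this
    exact_mod_cast (by omega : _ ≤ n)
  have : ∑ k ∈ S, |ind D u (k - n) - ind D u k| ≤ ∑ k ∈ S,
      ((if k ∈ Finset.Ioc (-(D.N u : ℤ)) (-(D.N u : ℤ) + n) then (1 : ℝ) else 0) +
       (if k ∈ Finset.Ioc (-(D.M (u - 1) : ℤ)) (-(D.M (u - 1) : ℤ) + n) then (1 : ℝ) else 0)) := by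
    apply Finset.sum_le_sum
    intro k _
    unfold ind
    simp only [Finset.mem_Ioc]
    split_ifs <;> first | (norm_num; done) | (exfalso; omega)
  rw [Finset.sum_add_distrib] at this
  linarith [key (-(D.N u : ℤ)), key (-(D.M (u - 1) : ℤ))]

lemma rr_eq {p : ℤ → ℝ} {P : Measure Xspace} (hP : IsKosloffMeasure D p P)
    {t : ℕ} (ht : 1 ≤ t) (n : ℕ) (w : Xspace) (U : ℕ) (hU : t ≤ U) (k : ℤ)
    (hk : -(D.M U : ℤ) < k - n) (hk' : k ≤ -(D.N t : ℤ)) :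
    rr p n w k = Real.exp (∑ u ∈ Finset.Ioc t U, (ind D u (k - n) - ind D u k) * cc D u (w k)) := by
  unfold rr
  rw [cw_formula D hP ht (w k) U hU (k - n) hk (by omega),
    cw_formula D hP ht (w k) U hU k (by omega) hk', mul_div_mul_left _ _ (by norm_num),
    ← Real.exp_sub, ← Finset.sum_sub_distrib]
  simp only [sub_mul]

lemma rr_pos {p : ℤ → ℝ} {P : Measure Xspace} (hP : IsKosloffMeasure D p P)
    {t : ℕ} (ht : 1 ≤ t) (n : ℕ) (w : Xspace) (k : ℤ) (hk' : k ≤ -(D.N t : ℤ)) :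
    0 < rr p n w k := by
  have h1 := lt_M D (t + (n - k).toNat)
  rw [rr_eq D hP ht n w (t + (n - k).toNat) (by omega) k (by omega) hk']
  positivity

lemma sum_bound {p : ℤ → ℝ} {P : Measure Xspace} (hP : IsKosloffMeasure D p P)
    {t : ℕ} (ht : 1 ≤ t) (n : ℕ) (hn : n < D.N t) (w : Xspace) (J : ℕ) :
    ∑ j ∈ Finset.range J, |Real.log (rr p n w (-(D.N t : ℤ) - j))|
      ≤ ∑' u : ℕ, D.eps (t + 1 + u) := by
  set U := t + D.N t + J + n with hUd
  have hUM := lt_M D U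
  let φ : ℕ ↪ ℤ := ⟨fun j => -(D.N t : ℤ) - j, by intro a b h; simp at h; exact h⟩
  have e1 : ∑ j ∈ Finset.range J, |Real.log (rr p n w (-(D.N t : ℤ) - j))|
      = ∑ k ∈ (Finset.range J).map φ, |Real.log (rr p n w k)| := by
    rw [Finset.sum_map]; rfl
  have hS : ∀ k ∈ (Finset.range J).map φ, -(D.M U : ℤ) < k - n ∧ k ≤ -(D.N t : ℤ) := by
    intro k hk
    simp only [Finset.mem_map, Finset.mem_range] at hk
    obtain ⟨j, hj, rfl⟩ := hk
    change -(D.M U : ℤ) < (-(D.N t : ℤ) - j) - n ∧ (-(D.N t : ℤ) - j) ≤ -(D.N t : ℤ)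
    omega
  have hsum : Summable (fun u : ℕ => D.eps (t + 1 + u)) := by
    have := (summable_nat_add_iff (t + 1)).2 D.eps_summable
    simpa [add_comm] using this
  rw [e1]
  generalize (Finset.range J).map φ = S at hS
  calc ∑ k ∈ S, |Real.log (rr p n w k)|
      ≤ ∑ k ∈ S, ∑ u ∈ Finset.Ioc t U, |ind D u (k - n) - ind D u k| * xx D u := by
        apply Finset.sum_le_sum
        intro k hk
        rw [rr_eq D hP ht n w U (by omega) k (hS k hk).1 (hS k hk).2, Real.log_exp]
        refine (Finset.abs_sum_le_sum_abs _ _).trans (Finset.sum_le_sum ?_)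
        intro u hu
        rw [Finset.mem_Ioc] at hu
        rw [abs_mul]
        exact mul_le_mul_of_nonneg_left (cc_abs D (by omega) _) (abs_nonneg _)
    _ = ∑ u ∈ Finset.Ioc t U, (∑ k ∈ S, |ind D u (k - n) - ind D u k|) * xx D u := by
        rw [Finset.sum_comm]; simp only [Finset.sum_mul]
    _ ≤ ∑ u ∈ Finset.Ioc t U, D.eps u := by
        apply Finset.sum_le_sum
        intro u hu
        rw [Finset.mem_Ioc] at hu
        have b1 := N_le_M D ht
        have b2 := (M_strictMono D).monotone (show t ≤ u - 1 by omega)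
        have b3 : (2 * n : ℝ) ≤ D.M (u - 1) := by exact_mod_cast (by omega)
        have b4 := ind_sum D u n S
        have b5 := xx_le D u (by omega)
        have b6 := xx_pos D u
        nlinarith
    _ = ∑ i ∈ Finset.range (U - t), D.eps (t + 1 + i) := by
        rw [Finset.sum_bij (fun u _ => u - (t + 1))]
        · intro a ha; simp at *; omega
        · intro a ha b hb h; simp at *; omega
        · intro b hb; simp at *; exact ⟨t + 1 + b, by omega, by omega⟩
        · intro a ha; simp at ha; congr 1; omega
    _ ≤ _ := by
        apply hsum.sum_le_tsum
        intro i _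
        exact (D.eps_pos _ (by omega)).le

lemma main1 {p : ℤ → ℝ} {P : Measure Xspace} (hP : IsKosloffMeasure D p P)
    {t : ℕ} (ht : 1 ≤ t) (n : ℕ) (hn : n < D.N t) (w : Xspace) :
    ∃ L : ℝ,
        Tendsto (fun M : ℕ =>
            ∏ k ∈ Finset.Icc (-(M : ℤ)) (-(D.N t : ℤ)), rr p n w k)
          atTop (nhds L) ∧
        Real.exp (-(∑' u : ℕ, D.eps (t + 1 + u))) ≤ L ∧
        L ≤ Real.exp (∑' u : ℕ, D.eps (t + 1 + u)) := by
  set s := ∑' u : ℕ, D.eps (t + 1 + u) with hs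
  set f : ℕ → ℝ := fun j => Real.log (rr p n w (-(D.N t : ℤ) - j)) with hf
  have hb : ∀ J, ∑ j ∈ Finset.range J, ‖f j‖ ≤ s := fun J => sum_bound D hP ht n hn w J
  have hsm : Summable (fun j => ‖f j‖) :=
    summable_of_sum_range_le (fun _ => norm_nonneg _) hb
  have h1 : |∑' j, f j| ≤ s := by
    have := norm_tsum_le_tsum_norm hsm
    rw [Real.norm_eq_abs] at this
    exact this.trans (Real.tsum_le_of_sum_range_le (fun _ => norm_nonneg _) hb)
  refine ⟨Real.exp (∑' j, f j), ?_, ?_, ?_⟩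
  · have h2 := hsm.of_norm.hasSum.tendsto_sum_nat
    have h3 : Tendsto (fun M : ℕ => M + 1 - D.N t) atTop atTop :=
      tendsto_atTop_atTop.2 fun b => ⟨b + D.N t, fun a ha => by omega⟩
    refine ((Real.continuous_exp.tendsto _).comp (h2.comp h3)).congr ?_
    intro M
    simp only [Function.comp, Real.exp_sum]
    symm
    refine Finset.prod_bij (fun k _ => (-(D.N t : ℤ) - k).toNat) ?_ ?_ ?_ ?_
    · intro a ha; simp at *; omega
    · intro a ha b hb h; simp at *; omega
    · intro b hb; simp at *; exact ⟨-(D.N t : ℤ) - b, by omega, by omega⟩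
    · intro a ha
      simp only [Finset.mem_Icc] at ha
      have : -(D.N t : ℤ) - ((-(D.N t : ℤ) - a).toNat : ℤ) = a := by omega
      simp only [hf, this]
      rw [Real.exp_log (rr_pos D hP ht n w a ha.2)]
  · exact Real.exp_le_exp.2 (abs_le.1 h1).1
  · exact Real.exp_le_exp.2 (abs_le.1 h1).2

lemma main2 {p : ℤ → ℝ} {P : Measure Xspace} (hP : IsKosloffMeasure D p P) :
    (∀ δ : ℝ, 0 < δ → ∃ n₀ : ℕ, ∀ n : ℕ, n₀ ≤ n → ∀ w : Xspace, ∀ L : ℝ,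
        Tendsto (fun M : ℕ =>
            ∏ k ∈ Finset.Icc (-(M : ℤ)) (-(D.N (tOf D n) : ℤ)), rr p n w k)
          atTop (nhds L) → |L - 1| ≤ δ) := by
  intro δ hδ
  have ht : Tendsto (fun i => ∑' u, D.eps (i + 1 + u)) atTop (𝓝 0) := by
    have := (tendsto_add_atTop_iff_nat 1).2 (tendsto_sum_nat_add D.eps)
    simpa only [add_comm, add_left_comm] using this
  have hA : Tendsto (fun i => Real.exp (∑' u, D.eps (i + 1 + u))) atTop (𝓝 1) := by
    simpa [Function.comp_def] using (Real.continuous_exp.tendsto 0).comp ht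
  have hB : Tendsto (fun i => Real.exp (-∑' u, D.eps (i + 1 + u))) atTop (𝓝 1) := by
    have h := ht.neg
    rw [neg_zero] at h
    simpa [Function.comp_def] using (Real.continuous_exp.tendsto 0).comp h
  obtain ⟨T, hT⟩ := ((hA.eventually_lt_const (show (1 : ℝ) < 1 + δ by linarith)).and
    (hB.eventually_const_lt (show (1 : ℝ) - δ < 1 by linarith))).exists_forall_of_atTop
  refine ⟨D.N (T + 1), fun n hn w L hL => ?_⟩
  obtain ⟨h1, h2⟩ := tOf_spec D n
  have h3 : T ≤ tOf D n := by
    by_contra hc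
    have := N_mono D h1 (show tOf D n ≤ T + 1 by omega)
    omega
  obtain ⟨L', a, b, c⟩ := main1 D hP h1 n h2 w
  have := tendsto_nhds_unique hL a
  subst this
  obtain ⟨d, e⟩ := hT _ h3
  rw [abs_le]
  constructor <;> linarith

end KosloffAux

/-- tail-product estimates: for every `n` and `w`,
`∏_{k=n}^{∞} P_{k-n}({w_k})/P_k({w_k}) = 1`, the negative tail product
`∏_{k=-∞}^{-N_{t(n)}} P_{k-n}({w_k})/P_k({w_k})` exists and lies in
`[e^{-∑_{u>t(n)} ε_u}, e^{∑_{u>t(n)} ε_u}]`; in particular it tends to `1` uniformly in `w`. -/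
theorem tail_product_estimates (D : KosloffData) (p : ℤ → ℝ) (P : Measure Xspace)
    (hP : IsKosloffMeasure D p P) :
    (∀ n : ℕ, ∀ w : Xspace,
      (∀ m : ℤ, (n : ℤ) ≤ m → ∏ k ∈ Finset.Icc (n : ℤ) m, rr p n w k = 1) ∧
      ∃ L : ℝ,
        Tendsto (fun M : ℕ =>
            ∏ k ∈ Finset.Icc (-(M : ℤ)) (-(D.N (tOf D n) : ℤ)), rr p n w k)
          atTop (nhds L) ∧
        Real.exp (-(∑' u : ℕ, D.eps (tOf D n + 1 + u))) ≤ L ∧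
        L ≤ Real.exp (∑' u : ℕ, D.eps (tOf D n + 1 + u))) ∧
    (∀ δ : ℝ, 0 < δ → ∃ n₀ : ℕ, ∀ n : ℕ, n₀ ≤ n → ∀ w : Xspace, ∀ L : ℝ,
        Tendsto (fun M : ℕ =>
            ∏ k ∈ Finset.Icc (-(M : ℤ)) (-(D.N (tOf D n) : ℤ)), rr p n w k)
          atTop (nhds L) → |L - 1| ≤ δ) := by
  refine ⟨fun n w => ⟨fun m hm => ?_, ?_⟩, KosloffAux.main2 D hP⟩
  · apply Finset.prod_eq_one
    intro k hk
    rw [Finset.mem_Icc] at hk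
    unfold rr
    rw [hP.2.1 k (by omega), hP.2.1 (k - n) (by omega)]
    apply div_self
    unfold coordWt
    split_ifs <;> norm_num
  · obtain ⟨h1, h2⟩ := KosloffAux.tOf_spec D n
    exact KosloffAux.main1 D hP h1 n h2 w
end
end

section
/- For every t ≥ 1, every n with N_{t-1} ≤ n < M_{t-1} (so that t(n) = t) and every w ∈ 𝕏, one has the exact identity ∏_{k=-N_{t(n)}+1}^{n-1} P_{k−n}({w_k}) / P_k({w_k}) = ∏_{u=1}^{t(n)} λ_u^{Υ_u(Tⁿw) − Υ_u(w)}. -/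
open MeasureTheory Filter Topology

noncomputable section

lemma aux_split (f : ℤ → ℝ) {a b c : ℤ} (h1 : a ≤ b) (h2 : b ≤ c) :
    ∏ k ∈ Finset.Ioc a c, f k = (∏ k ∈ Finset.Ioc a b, f k) * ∏ k ∈ Finset.Ioc b c, f k := by
  rw [← Finset.Ioc_union_Ioc_eq_Ioc h1 h2, Finset.prod_union]
  exact Finset.Ioc_disjoint_Ioc_of_le le_rfl

lemma aux_icc (a b : ℤ) : Finset.Icc (a + 1) b = Finset.Ioc a b := by
  ext x; simp only [Finset.mem_Icc, Finset.mem_Ioc]; omega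

lemma aux_zpow (x : ℝ) (hx : x ≠ 0) (s : Finset ℤ) (g : ℤ → ℤ) :
    ∏ k ∈ s, x ^ g k = x ^ ∑ k ∈ s, g k := by
  induction s using Finset.induction_on with
  | empty => simp
  | insert a s ha ih => rw [Finset.prod_insert ha, Finset.sum_insert ha, zpow_add₀ hx, ih]

lemma aux_iter (n : ℕ) (w : Xspace) (k : ℤ) : (shiftT^[n] w) k = w (k + n) := by
  induction n generalizing w with
  | zero => simp
  | succ n ih =>
    rw [Function.iterate_succ_apply, ih]
    simp only [shiftT]; congr 1; push_cast; ring

lemma aux_lam (D : KosloffData) (t : ℕ) (ht : 1 ≤ t) : 0 < D.lam t := by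
  rw [D.lam_def t ht]; exact Real.exp_pos _

lemma aux_half (v : Xspace) (p : ℤ → ℝ) (k : ℤ) (h : p k = 1 / 2) :
    coordWt (p k) (v k) = 1 / 2 := by
  rw [h]; unfold coordWt; split_ifs <;> norm_num

lemma aux_MN (D : KosloffData) (s : ℕ) : D.M s < D.N (s + 1) := by
  have := D.N_def (s + 1) (by omega)
  have := D.nn_pos (s + 1) (by omega)
  simp at *; omega

lemma aux_NM (D : KosloffData) (s : ℕ) : 2 * D.N (s + 1) ≤ D.M (s + 1) := by
  have h1 := D.M_def (s + 1) (by omega)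
  have h2 := D.m_def (s + 1) (by omega)
  nlinarith [Nat.zero_le (D.N (s + 1) * 2 ^ (3 * D.N (s + 1)))]

lemma aux_M1 (D : KosloffData) (s : ℕ) : 1 ≤ D.M s := by
  cases s with
  | zero => rw [D.M_zero]
  | succ s => have := aux_NM D s; have := aux_MN D s; omega

lemma aux_block (D : KosloffData) (p : ℤ → ℝ) (P : Measure Xspace)
    (hP : IsKosloffMeasure D p P) (s : ℕ) (v : Xspace) :
    ∏ k ∈ Finset.Ioc (-(D.N (s + 1) : ℤ)) (-(D.M s : ℤ)), coordWt (p k) (v k)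
      = (∏ k ∈ Finset.Ioc (-(D.N (s + 1) : ℤ)) (-(D.M s : ℤ)), p k)
        * D.lam (s + 1) ^ Ups D (s + 1) v := by
  obtain ⟨-, -, hp, -, -⟩ := hP
  have hl := aux_lam D (s + 1) (by omega)
  unfold Ups
  rw [aux_icc, ← aux_zpow _ hl.ne', Nat.add_sub_cancel, ← Finset.prod_mul_distrib]
  refine Finset.prod_congr rfl fun k hk => ?_
  rw [Finset.mem_Ioc] at hk
  rw [hp (s + 1) (by omega) k hk.1 hk.2]
  unfold coordWt
  split_ifs
  · rw [zpow_one]; field_simp; ring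
  · simp

lemma aux_gap (D : KosloffData) (p : ℤ → ℝ) (P : Measure Xspace)
    (hP : IsKosloffMeasure D p P) (s : ℕ) (v : Xspace) :
    ∏ k ∈ Finset.Ioc (-(D.M (s + 1) : ℤ)) (-(D.N (s + 1) : ℤ)), coordWt (p k) (v k)
      = ∏ k ∈ Finset.Ioc (-(D.M (s + 1) : ℤ)) (-(D.N (s + 1) : ℤ)), p k := by
  obtain ⟨-, -, -, hp, -⟩ := hP
  refine Finset.prod_congr rfl fun k hk => ?_
  rw [Finset.mem_Ioc] at hk
  have := hp (s + 1) (by omega) k hk.1 hk.2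
  rw [aux_half v p k this, this]

lemma aux_stepN (D : KosloffData) (p : ℤ → ℝ) (P : Measure Xspace)
    (hP : IsKosloffMeasure D p P) (s : ℕ) (v : Xspace)
    (ih : ∏ k ∈ Finset.Ioc (-(D.M s : ℤ)) (-1), coordWt (p k) (v k)
      = (∏ k ∈ Finset.Ioc (-(D.M s : ℤ)) (-1), p k) * fT D s v) :
    ∏ k ∈ Finset.Ioc (-(D.N (s + 1) : ℤ)) (-1), coordWt (p k) (v k)
      = (∏ k ∈ Finset.Ioc (-(D.N (s + 1) : ℤ)) (-1), p k) * fT D (s + 1) v := by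
  have a := aux_MN D s
  have b := aux_M1 D s
  have h1 : -(D.N (s + 1) : ℤ) ≤ -(D.M s : ℤ) := by omega
  have h2 : -(D.M s : ℤ) ≤ -1 := by omega
  rw [aux_split _ h1 h2, aux_split p h1 h2, ih, aux_block D p P hP s v]
  have : fT D (s + 1) v = fT D s v * D.lam (s + 1) ^ Ups D (s + 1) v := by
    unfold fT; rw [Finset.prod_Icc_succ_top (by omega)]
  rw [this]; ring

lemma aux_M (D : KosloffData) (p : ℤ → ℝ) (P : Measure Xspace)
    (hP : IsKosloffMeasure D p P) (s : ℕ) (v : Xspace) :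
    ∏ k ∈ Finset.Ioc (-(D.M s : ℤ)) (-1), coordWt (p k) (v k)
      = (∏ k ∈ Finset.Ioc (-(D.M s : ℤ)) (-1), p k) * fT D s v := by
  induction s with
  | zero => simp [D.M_zero, fT]
  | succ s ih =>
    have a := aux_MN D s
    have b := aux_M1 D s
    have c := aux_NM D s
    have h1 : -(D.M (s + 1) : ℤ) ≤ -(D.N (s + 1) : ℤ) := by omega
    have h2 : -(D.N (s + 1) : ℤ) ≤ -1 := by omega
    rw [aux_split _ h1 h2, aux_split p h1 h2, aux_stepN D p P hP s v ih, aux_gap D p P hP s v]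
    ring

lemma aux_pne (D : KosloffData) (p : ℤ → ℝ) (P : Measure Xspace)
    (hP : IsKosloffMeasure D p P) (s : ℕ) :
    ∏ k ∈ Finset.Ioc (-(D.M s : ℤ)) (-1), p k ≠ 0 := by
  induction s with
  | zero => simp [D.M_zero]
  | succ s ih =>
    have a := aux_MN D s
    have b := aux_M1 D s
    have c := aux_NM D s
    obtain ⟨-, -, hp, hq, -⟩ := hP
    rw [aux_split p (b := -(D.N (s + 1) : ℤ)) (by omega) (by omega),
      aux_split p (a := -(D.N (s + 1) : ℤ)) (b := -(D.M s : ℤ)) (by omega) (by omega)]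
    refine mul_ne_zero ?_ (mul_ne_zero ?_ ih)
    · rw [Finset.prod_ne_zero_iff]
      intro k hk
      rw [Finset.mem_Ioc] at hk
      rw [hq (s + 1) (by omega) k hk.1 hk.2]; norm_num
    · rw [Finset.prod_ne_zero_iff]
      intro k hk
      rw [Finset.mem_Ioc] at hk
      have hl := aux_lam D (s + 1) (by omega)
      rw [hp (s + 1) (by omega) k hk.1 hk.2]; positivity

lemma aux_N_mono (D : KosloffData) (s r : ℕ) : D.N (s + 1) ≤ D.N (s + 1 + r) := by
  induction r with
  | zero => simp
  | succ r ih =>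
    have a := aux_NM D (s + r)
    have b := aux_MN D (s + r + 1)
    rw [show s + 1 + (r + 1) = s + r + 1 + 1 by omega]
    rw [show s + 1 + r = s + r + 1 by omega] at ih
    omega

/-- for `t ≥ 1` and `N_{t-1} ≤ n < M_{t-1}` one has `t(n) = t` and the exact
identity `∏_{k=-N_t+1}^{n-1} P_{k-n}({w_k})/P_k({w_k}) = ∏_{u=1}^{t} λ_u^{Υ_u(Tⁿw)-Υ_u(w)}`. -/
theorem finite_product_eq_lambda_powers (D : KosloffData) (p : ℤ → ℝ) (P : Measure Xspace)
    (hP : IsKosloffMeasure D p P)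
    (t : ℕ) (ht : 1 ≤ t) (n : ℕ) (h1 : D.N (t - 1) ≤ n) (h2 : n < D.M (t - 1)) :
    tOf D n = t ∧
    ∀ w : Xspace,
      ∏ k ∈ Finset.Icc (-(D.N t : ℤ) + 1) ((n : ℤ) - 1), rr p n w k
        = ∏ u ∈ Finset.Icc 1 t, D.lam u ^ (Ups D u (shiftT^[n] w) - Ups D u w) := by
  obtain ⟨s, rfl⟩ : ∃ s, t = s + 1 := ⟨t - 1, by omega⟩
  rw [Nat.add_sub_cancel] at h1 h2
  have a := aux_MN D s
  have b := aux_M1 D s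
  have c := aux_NM D s
  constructor
  · unfold tOf
    apply le_antisymm
    · exact Nat.sInf_le ⟨ht, by omega⟩
    · refine le_csInf ⟨s + 1, ht, by omega⟩ ?_
      rintro r ⟨hr1, hr2⟩
      by_contra hlt
      obtain ⟨q, rfl⟩ : ∃ q, r = q + 1 := ⟨r - 1, by omega⟩
      have := aux_N_mono D q (s - (q + 1))
      rw [show q + 1 + (s - (q + 1)) = s by omega] at this
      omega
  · intro w
    have hden : ∏ k ∈ Finset.Ioc (-(D.N (s + 1) : ℤ)) ((n : ℤ) - 1), coordWt (p k) (w k)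
        = (∏ k ∈ Finset.Ioc (-(D.N (s + 1) : ℤ)) (-1), p k) * fT D (s + 1) w * (1 / 2) ^ n := by
      rw [aux_split _ (b := -1) (by omega) (by omega),
        aux_stepN D p P hP s w (aux_M D p P hP s w)]
      congr 1
      rw [Finset.prod_congr rfl (g := fun _ => (1 / 2 : ℝ)), Finset.prod_const, Int.card_Ioc]
      · congr 1; omega
      · intro k hk
        rw [Finset.mem_Ioc] at hk
        exact aux_half w p k (hP.2.1 k (by omega))
    have hnum : ∏ k ∈ Finset.Ioc (-(D.N (s + 1) : ℤ)) ((n : ℤ) - 1), coordWt (p (k - n)) (w k)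
        = (∏ k ∈ Finset.Ioc (-(D.N (s + 1) : ℤ)) (-1), p k) * fT D (s + 1) (shiftT^[n] w)
          * (1 / 2) ^ n := by
      have hre : ∏ k ∈ Finset.Ioc (-(D.N (s + 1) : ℤ)) ((n : ℤ) - 1), coordWt (p (k - n)) (w k)
          = ∏ k ∈ Finset.Ioc (-(D.N (s + 1) : ℤ) - n) (-1),
            coordWt (p k) ((shiftT^[n] w) k) := by
        refine Finset.prod_bij' (fun k _ => k - n) (fun k _ => k + n) ?_ ?_ ?_ ?_ ?_
        · intro k hk; rw [Finset.mem_Ioc] at *; omega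
        · intro k hk; rw [Finset.mem_Ioc] at *; omega
        · intro k hk; simp
        · intro k hk; simp
        · intro k hk; rw [aux_iter]; simp
      rw [hre, aux_split _ (b := -(D.N (s + 1) : ℤ)) (by omega) (by omega),
        aux_stepN D p P hP s _ (aux_M D p P hP s _), mul_comm]
      congr 1
      rw [Finset.prod_congr rfl (g := fun _ => (1 / 2 : ℝ)), Finset.prod_const, Int.card_Ioc]
      · congr 1; omega
      · intro k hk
        rw [Finset.mem_Ioc] at hk
        exact aux_half _ p k (hP.2.2.2.1 (s + 1) (by omega) k (by omega) (by omega))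
    have hC : ∏ k ∈ Finset.Ioc (-(D.N (s + 1) : ℤ)) (-1), p k ≠ 0 := by
      have := aux_pne D p P hP (s + 1)
      rw [aux_split p (b := -(D.N (s + 1) : ℤ)) (by omega) (by omega)] at this
      exact right_ne_zero_of_mul this
    have hl : ∀ u ∈ Finset.Icc 1 (s + 1), D.lam u ≠ 0 := fun u hu =>
      (aux_lam D u (Finset.mem_Icc.1 hu).1).ne'
    have hR : ∏ u ∈ Finset.Icc 1 (s + 1), D.lam u ^ (Ups D u (shiftT^[n] w) - Ups D u w)
        = fT D (s + 1) (shiftT^[n] w) / fT D (s + 1) w := by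
      unfold fT
      rw [← Finset.prod_div_distrib]
      exact Finset.prod_congr rfl fun u hu => zpow_sub₀ (hl u hu) _ _
    unfold rr
    rw [hR, aux_icc, Finset.prod_div_distrib, hnum, hden,
      mul_div_mul_right _ _ (by positivity), mul_div_mul_left _ _ hC]
end
end

section
/- For every n with N_{t(n)-1} ≤ n < M_{t(n)-1} and every w ∈ 𝕏 one can write (Tⁿ)'(w) = K_n(w) · f_{t(n)-1}(Tⁿw) / f_{t(n)-1}(w), where K_n(w) := (Tⁿ)'(w) · f_{t(n)-1}(w) / f_{t(n)-1}(Tⁿw) satisfies lim_{n→∞} K_n(w) = 1 uniformly in w ∈ 𝕏 (n ranging over ∪_t [N_{t-1}, M_{t-1})). -/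
open MeasureTheory Filter Topology

noncomputable section

lemma kx_shiftInv_iter (n : ℕ) (w : Xspace) (i : ℤ) : (shiftInv^[n] w) i = w (i - n) := by
  induction n generalizing w with
  | zero => simp
  | succ n ih =>
    rw [Function.iterate_succ_apply, ih]
    simp only [shiftInv]
    congr 1; push_cast; ring

lemma kx_shiftT_iter (n : ℕ) (w : Xspace) (i : ℤ) : (shiftT^[n] w) i = w (i + n) := by
  induction n generalizing w with
  | zero => simp
  | succ n ih =>
    rw [Function.iterate_succ_apply, ih]
    simp only [shiftT]
    congr 1; push_cast; ring

lemma kx_meas_inv (n : ℕ) : Measurable (shiftInv^[n] : Xspace → Xspace) := by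
  rw [measurable_pi_iff]
  intro i
  simp only [kx_shiftInv_iter]
  exact measurable_pi_apply _

lemma kx_meas_T (n : ℕ) : Measurable (shiftT^[n] : Xspace → Xspace) := by
  rw [measurable_pi_iff]
  intro i
  simp only [kx_shiftT_iter]
  exact measurable_pi_apply _

lemma kx_meas_fT (D : KosloffData) (t : ℕ) : Measurable (fT D t) := by
  unfold fT
  refine Finset.measurable_prod _ fun u _ => ?_
  have h1 : Measurable (Ups D u) := by
    unfold Ups
    refine Finset.measurable_sum _ fun k _ => ?_
    exact (Measurable.of_discrete (f := fun b : Bool => if b then (1:ℤ) else 0)).comp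
      (measurable_pi_apply k)
  exact (Measurable.of_discrete (f := fun z : ℤ => D.lam u ^ z)).comp h1

lemma kx_cyl_meas (J : Finset ℤ) (b : Xspace) :
    MeasurableSet {w : Xspace | ∀ k ∈ J, w k = b k} := by
  have : {w : Xspace | ∀ k ∈ J, w k = b k} = ⋂ k ∈ J, (fun w : Xspace => w k) ⁻¹' {b k} := by
    ext w; simp
  rw [this]
  refine Finset.measurableSet_biInter _ fun k _ => ?_
  exact measurable_pi_apply k (MeasurableSet.singleton _)

lemma kx_cyl_le (μ ν : Measure Xspace) [IsFiniteMeasure μ] [IsFiniteMeasure ν]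
    (J : ℕ → Finset ℤ) (hJ : Monotone J) (hex : ∀ k : ℤ, ∃ i, k ∈ J i)
    (h : ∀ (i : ℕ) (b : Xspace), μ {w : Xspace | ∀ k ∈ J i, w k = b k} ≤ ν {w : Xspace | ∀ k ∈ J i, w k = b k}) :
    μ ≤ ν := by
  classical
  have hopen : ∀ U : Set Xspace, IsOpen U → μ U ≤ ν U := by
    intro U hU
    let V : ℕ → Set Xspace := fun i => {x | ∀ w : Xspace, (∀ k ∈ J i, w k = x k) → w ∈ U}
    have hVm : Monotone V := by
      intro i j hij x hx w hw
      exact hx w fun k hk => hw k (hJ hij hk)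
    have hVU : U = ⋃ i, V i := by
      ext x
      simp only [Set.mem_iUnion]
      constructor
      · intro hx
        rw [isOpen_pi_iff] at hU
        obtain ⟨I, u, hu, hsub⟩ := hU x hx
        have : ∃ i, I ⊆ J i := by
          clear hsub hu
          induction I using Finset.induction_on with
          | empty => exact ⟨0, by simp⟩
          | insert a I ha ih =>
            obtain ⟨i, hi⟩ := ih
            obtain ⟨j, hj⟩ := hex a
            refine ⟨max i j, ?_⟩
            rw [Finset.insert_subset_iff]
            exact ⟨hJ (le_max_right _ _) hj, hi.trans (hJ (le_max_left _ _))⟩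
        obtain ⟨i, hi⟩ := this
        refine ⟨i, fun w hw => hsub ?_⟩
        intro k hk
        rw [hw k (hi hk)]
        exact (hu k hk).2
      · rintro ⟨i, hi⟩
        exact hi x fun _ _ => rfl
    have hV : ∀ i, μ (V i) ≤ ν (V i) := by
      intro i
      let r : Xspace → (J i → Bool) := fun w k => w k
      let S : Finset (J i → Bool) := Finset.univ.filter fun y => ∃ x ∈ V i, r x = y
      have hS : V i = r ⁻¹' (S : Set (J i → Bool)) := by
        ext x
        simp only [Set.mem_preimage, S, Finset.coe_filter, Finset.mem_univ, true_and,
          Set.mem_ofPred_eq]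
        constructor
        · intro hx; exact ⟨x, hx, rfl⟩
        · rintro ⟨y, hy, hxy⟩ w hw
          refine hy w fun k hk => ?_
          rw [hw k hk]
          exact (congrFun hxy ⟨k, hk⟩).symm
      have hr : Measurable r := by
        rw [measurable_pi_iff]; intro k; exact measurable_pi_apply _
      rw [hS, ← sum_measure_preimage_singleton S fun y _ => hr (MeasurableSet.singleton y),
        ← sum_measure_preimage_singleton S fun y _ => hr (MeasurableSet.singleton y)]
      refine Finset.sum_le_sum fun y _ => ?_
      have : r ⁻¹' {y} = {w : Xspace | ∀ k ∈ J i, w k =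
          (fun k => if hk : k ∈ J i then y ⟨k, hk⟩ else false) k} := by
        ext w
        simp only [Set.mem_preimage, Set.mem_singleton_iff, Set.mem_ofPred_eq, r]
        constructor
        · intro hw k hk
          rw [← hw]; simp [hk]
        · intro hw
          funext k
          rw [hw k k.2]; simp
      rw [this]
      exact h i _
    rw [hVU, hVm.measure_iUnion, hVm.measure_iUnion]
    exact iSup_mono hV
  refine Measure.le_iff.2 fun s _ => ?_
  rw [s.measure_eq_iInf_isOpen ν]
  refine le_iInf fun U => le_iInf fun hsU => le_iInf fun hU => ?_
  exact (measure_mono hsU).trans (hopen U hU)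

lemma kx_rn (P Q : Measure Xspace) [IsFiniteMeasure P] [IsFiniteMeasure Q]
    (g : Xspace → ℝ) (hg : Measurable g) (hgpos : ∀ w, 0 < g w) (δ : ℝ) (hδ : 0 < δ)
    (h1 : Q ≤ P.withDensity fun w => ENNReal.ofReal ((1 + δ) * g w))
    (h2 : P.withDensity (fun w => ENNReal.ofReal ((1 - δ) * g w)) ≤ Q) :
    ∀ᵐ w ∂P, |(Q.rnDeriv P w).toReal / g w - 1| ≤ δ := by
  have hac : Q ≪ P := (Measure.absolutelyContinuous_of_le h1).trans
    (withDensity_absolutelyContinuous _ _)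
  have hld : Q.HaveLebesgueDecomposition P := Measure.haveLebesgueDecomposition_of_finiteMeasure
  have hQ : P.withDensity (Q.rnDeriv P) = Q := Measure.withDensity_rnDeriv_eq _ _ hac
  have e1 : Q.rnDeriv P ≤ᵐ[P] fun w => ENNReal.ofReal ((1 + δ) * g w) := by
    refine ae_le_of_forall_setLIntegral_le_of_sigmaFinite (Measure.measurable_rnDeriv _ _) ?_
    intro s hs _
    rw [← withDensity_apply _ hs, ← withDensity_apply _ hs, hQ]
    exact h1 s
  have e2 : (fun w => ENNReal.ofReal ((1 - δ) * g w)) ≤ᵐ[P] Q.rnDeriv P := by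
    refine ae_le_of_forall_setLIntegral_le_of_sigmaFinite (by fun_prop) ?_
    intro s hs _
    rw [← withDensity_apply _ hs, ← withDensity_apply _ hs, hQ]
    exact h2 s
  filter_upwards [e1, e2] with w hw1 hw2
  have hgw := hgpos w
  have hfin : Q.rnDeriv P w ≠ ⊤ := ne_top_of_le_ne_top ENNReal.ofReal_ne_top hw1
  have a1 : (Q.rnDeriv P w).toReal ≤ (1 + δ) * g w :=
    ENNReal.toReal_le_of_le_ofReal (by positivity) hw1
  have a2 : (1 - δ) * g w ≤ (Q.rnDeriv P w).toReal :=
    (ENNReal.ofReal_le_iff_le_toReal hfin).1 hw2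
  rw [abs_le]
  constructor
  · have := (le_div_iff₀ hgw).2 a2
    linarith
  · have := (div_le_iff₀ hgw).2 a1
    linarith

lemma kx_sum_shift1 (g : ℤ → ℤ) (hg : ∀ k, 0 ≤ g k ∧ g k ≤ 1) (a b : ℤ) :
    |∑ k ∈ Finset.Icc a b, g (k + 1) - ∑ k ∈ Finset.Icc a b, g k| ≤ 1 := by
  rcases lt_or_ge b a with hab | hab
  · simp [Finset.Icc_eq_empty_of_lt hab]
  have e : ∑ k ∈ Finset.Icc a b, g (k + 1) = ∑ k ∈ Finset.Icc (a + 1) (b + 1), g k := by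
    rw [← Finset.map_add_right_Icc, Finset.sum_map]; simp
  have e1 : Finset.Icc a (b + 1) = insert a (Finset.Icc (a + 1) (b + 1)) := by
    ext x; simp only [Finset.mem_insert, Finset.mem_Icc]; omega
  have e2 : Finset.Icc a (b + 1) = insert (b + 1) (Finset.Icc a b) := by
    ext x; simp only [Finset.mem_insert, Finset.mem_Icc]; omega
  have f1 : ∑ k ∈ Finset.Icc a (b + 1), g k = g a + ∑ k ∈ Finset.Icc (a + 1) (b + 1), g k := by
    rw [e1, Finset.sum_insert (by simp)]
  have f2 : ∑ k ∈ Finset.Icc a (b + 1), g k = g (b + 1) + ∑ k ∈ Finset.Icc a b, g k := by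
    rw [e2, Finset.sum_insert (by simp)]
  have := hg a
  have := hg (b + 1)
  rw [e, abs_le]
  constructor <;> linarith

lemma kx_sum_shift (g : ℤ → ℤ) (hg : ∀ k, 0 ≤ g k ∧ g k ≤ 1) (a b : ℤ) (n : ℕ) :
    |∑ k ∈ Finset.Icc a b, g (k + n) - ∑ k ∈ Finset.Icc a b, g k| ≤ n := by
  induction n with
  | zero => simp
  | succ n ih =>
    have := kx_sum_shift1 (fun k => g (k + n)) (fun k => hg _) a b
    have e : ∀ k : ℤ, k + ((n + 1 : ℕ) : ℤ) = k + 1 + n := by intro k; push_cast; ring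
    simp only [e]
    rw [abs_le] at *
    push_cast
    constructor <;> linarith [ih.1, ih.2, this.1, this.2]

lemma kx_Ups_shift (D : KosloffData) (u n : ℕ) (w : Xspace) :
    |Ups D u (shiftT^[n] w) - Ups D u w| ≤ n := by
  unfold Ups
  simp only [kx_shiftT_iter]
  exact kx_sum_shift (fun k => if w k then 1 else 0) (fun k => by split_ifs <;> simp) _ _ n

lemma kx_lam_pos (D : KosloffData) (u : ℕ) (hu : 1 ≤ u) : 0 < D.lam u := by
  rw [D.lam_def u hu]; exact Real.exp_pos _

lemma kx_fT_pos (D : KosloffData) (t : ℕ) (w : Xspace) : 0 < fT D t w := by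
  unfold fT
  refine Finset.prod_pos fun u hu => ?_
  exact zpow_pos (kx_lam_pos D u (Finset.mem_Icc.1 hu).1) _

lemma kx_NM (D : KosloffData) (s : ℕ) : D.M s < D.N (s + 1) ∧ 2 * D.N (s + 1) ≤ D.M (s + 1) := by
  have h1 := D.N_def (s + 1) (by omega)
  have h2 := D.nn_pos (s + 1) (by omega)
  have h3 := D.m_def (s + 1) (by omega)
  have h4 := D.M_def (s + 1) (by omega)
  simp only [Nat.add_sub_cancel] at h1
  refine ⟨by omega, ?_⟩
  have : D.N (s + 1) * 1 ≤ D.N (s + 1) * (2 + 2 ^ (3 * D.N (s + 1))) :=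
    Nat.mul_le_mul_left _ ((by norm_num : 1 ≤ 2).trans (Nat.le_add_right _ _))
  omega

lemma kx_M_strict (D : KosloffData) : StrictMono D.M := by
  refine strictMono_nat_of_lt_succ fun s => ?_
  have := kx_NM D s
  omega

lemma kx_N_le (D : KosloffData) {s t : ℕ} (hs : 1 ≤ s) (h : s ≤ t) : D.N s ≤ D.N t := by
  rcases h.eq_or_lt with rfl | h
  · rfl
  obtain ⟨s, rfl⟩ : ∃ s', s = s' + 1 := ⟨s - 1, by omega⟩
  obtain ⟨t, rfl⟩ : ∃ s', t = s' + 1 := ⟨t - 1, by omega⟩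
  have h1 := kx_NM D s
  have h2 := kx_NM D t
  have h3 := (kx_M_strict D).monotone (show s + 1 ≤ t by omega)
  omega

lemma kx_tOf (D : KosloffData) (n : ℕ) : 1 ≤ tOf D n ∧ n < D.N (tOf D n) := by
  have : {t : ℕ | 1 ≤ t ∧ n < D.N t}.Nonempty := by
    refine ⟨n + 1, by omega, ?_⟩
    have h1 := kx_NM D n
    have h2 := (kx_M_strict D).le_apply (x := n)
    omega
  exact Nat.sInf_mem this

lemma kx_log_lam (D : KosloffData) (u : ℕ) (hu : 1 ≤ u) :
    0 ≤ Real.log (D.lam u) ∧ D.M (u - 1) * Real.log (D.lam u) ≤ D.eps u := by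
  rw [D.lam_def u hu, Real.log_exp]
  have he := D.eps_pos u hu
  have hM : (0:ℝ) < D.M (u - 1) := by
    have h := (kx_M_strict D).monotone (Nat.zero_le (u - 1))
    rw [D.M_zero] at h
    exact_mod_cast h
  refine ⟨by positivity, ?_⟩
  have hx : 0 < (D.M (u - 1) : ℝ) / D.eps u := by positivity
  have h1 : (D.M (u - 1) : ℝ) / D.eps u ≤
      (2:ℝ) ^ (⌊Real.logb 2 ((D.M (u - 1) : ℝ) / D.eps u)⌋ + 1) := by
    rw [← Real.rpow_intCast]
    rw [← Real.logb_le_iff_le_rpow (by norm_num) hx]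
    push_cast
    exact (Int.lt_floor_add_one _).le
  rw [zpow_neg, ← div_eq_mul_inv, div_le_iff₀ (by positivity)]
  rw [div_le_iff₀ he] at h1
  linarith

lemma kx_lam_zpow (D : KosloffData) (u n : ℕ) (hu : 1 ≤ u) (hn : n ≤ D.M (u - 1)) (d : ℤ)
    (hd : |d| ≤ n) : Real.exp (-D.eps u) ≤ D.lam u ^ d ∧ D.lam u ^ d ≤ Real.exp (D.eps u) := by
  obtain ⟨h0, h1⟩ := kx_log_lam D u hu
  have e : D.lam u ^ d = Real.exp (d * Real.log (D.lam u)) := by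
    rw [mul_comm, Real.exp_mul, Real.exp_log (kx_lam_pos D u hu), Real.rpow_intCast]
  have hd' : |(d:ℝ)| ≤ D.M (u - 1) := by
    have : |d| ≤ (D.M (u - 1) : ℤ) := hd.trans (by exact_mod_cast hn)
    exact_mod_cast this
  have : |d * Real.log (D.lam u)| ≤ D.eps u := by
    rw [abs_mul, abs_of_nonneg h0]
    exact (mul_le_mul_of_nonneg_right hd' h0).trans h1
  rw [abs_le] at this
  rw [e]
  exact ⟨Real.exp_le_exp.2 this.1, Real.exp_le_exp.2 this.2⟩

lemma kx_fT_split (D : KosloffData) (t s : ℕ) (hts : t ≤ s) (w : Xspace) :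
    fT D s w = fT D t w * ∏ u ∈ Finset.Icc (t + 1) s, D.lam u ^ Ups D u w := by
  unfold fT
  rw [← Finset.prod_union]
  · congr 1
    ext x; simp only [Finset.mem_union, Finset.mem_Icc]; omega
  · rw [Finset.disjoint_left]
    intro x; simp only [Finset.mem_Icc]; omega

/-- Ratio bound. -/
lemma kx_ratio (D : KosloffData) (t s n : ℕ) (hts : t ≤ s) (hn : n ≤ D.M t) (w : Xspace) (η : ℝ)
    (hη : ∑ u ∈ Finset.Icc (t + 1) s, D.eps u ≤ η) :
    ∃ q : ℝ, Real.exp (-η) ≤ q ∧ q ≤ Real.exp η ∧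
      fT D s (shiftT^[n] w) / fT D s w = q * (fT D t (shiftT^[n] w) / fT D t w) := by
  have hb : ∀ u ∈ Finset.Icc (t + 1) s,
      Real.exp (-D.eps u) ≤ D.lam u ^ (Ups D u (shiftT^[n] w) - Ups D u w) ∧
      D.lam u ^ (Ups D u (shiftT^[n] w) - Ups D u w) ≤ Real.exp (D.eps u) := by
    intro u hu
    rw [Finset.mem_Icc] at hu
    exact kx_lam_zpow D u n (by omega)
      (hn.trans ((kx_M_strict D).monotone (by omega))) _ (kx_Ups_shift D u n w)
  refine ⟨∏ u ∈ Finset.Icc (t + 1) s, D.lam u ^ (Ups D u (shiftT^[n] w) - Ups D u w), ?_, ?_, ?_⟩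
  · calc Real.exp (-η) ≤ Real.exp (∑ u ∈ Finset.Icc (t + 1) s, -D.eps u) := by
          rw [Finset.sum_neg_distrib]; exact Real.exp_le_exp.2 (by linarith)
      _ = ∏ u ∈ Finset.Icc (t + 1) s, Real.exp (-D.eps u) := Real.exp_sum _ _
      _ ≤ _ := Finset.prod_le_prod (fun _ _ => (Real.exp_pos _).le) fun u hu => (hb u hu).1
  · calc _ ≤ ∏ u ∈ Finset.Icc (t + 1) s, Real.exp (D.eps u) :=
          Finset.prod_le_prod (fun u hu => (Real.exp_pos _).le.trans (hb u hu).1)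
            fun u hu => (hb u hu).2
      _ = Real.exp (∑ u ∈ Finset.Icc (t + 1) s, D.eps u) := (Real.exp_sum _ _).symm
      _ ≤ _ := Real.exp_le_exp.2 hη
  · rw [kx_fT_split D t s hts, kx_fT_split D t s hts, mul_div_mul_comm, mul_comm,
      ← Finset.prod_div_distrib]
    congr 1
    refine Finset.prod_congr rfl fun u hu => ?_
    rw [Finset.mem_Icc] at hu
    rw [zpow_sub₀ (kx_lam_pos D u (by omega)).ne']

lemma kx_prod_split (f : ℤ → ℝ) (a b c : ℤ) (hab : a ≤ b) (hbc : b ≤ c) :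
    ∏ k ∈ Finset.Ioc a c, f k = (∏ k ∈ Finset.Ioc a b, f k) * ∏ k ∈ Finset.Ioc b c, f k := by
  rw [← Finset.prod_union]
  · congr 1
    ext x; simp only [Finset.mem_union, Finset.mem_Ioc]; omega
  · rw [Finset.disjoint_left]
    intro x; simp only [Finset.mem_Ioc]; omega

lemma kx_half (b : Bool) : coordWt (1 / 2) b = 1 / 2 := by
  unfold coordWt; split_ifs <;> norm_num

lemma kx_prod_coord (D : KosloffData) (p : ℤ → ℝ) (P : Measure Xspace)
    (hP : IsKosloffMeasure D p P) (s : ℕ) (l : ℤ) (hl : 0 ≤ l) (w : Xspace) :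
    ∏ k ∈ Finset.Ioc (-(D.M s : ℤ)) l, coordWt (p k) (w k)
      = (∏ k ∈ Finset.Ioc (-(D.M s : ℤ)) l, p k) * fT D s w := by
  obtain ⟨_, h0, h1, h2, _⟩ := hP
  induction s with
  | zero =>
    simp only [fT]
    rw [D.M_zero]
    simp only [zero_lt_one, Finset.Icc_eq_empty_of_lt, Finset.prod_empty, mul_one]
    refine Finset.prod_congr rfl fun k hk => ?_
    rw [Finset.mem_Ioc] at hk
    rw [h0 k (by push_cast at hk; omega), kx_half]
  | succ s ih =>
    have hNM := kx_NM D s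
    have S := fun f : ℤ → ℝ => kx_prod_split f (-(D.M (s + 1) : ℤ)) (-(D.N (s + 1) : ℤ)) l
      (by omega) (by omega)
    have S' := fun f : ℤ → ℝ => kx_prod_split f (-(D.N (s + 1) : ℤ)) (-(D.M s : ℤ)) l
      (by omega) (by omega)
    rw [S, S', ih, S p, S' p]
    have e1 : ∏ k ∈ Finset.Ioc (-(D.M (s + 1) : ℤ)) (-(D.N (s + 1) : ℤ)), coordWt (p k) (w k)
        = ∏ k ∈ Finset.Ioc (-(D.M (s + 1) : ℤ)) (-(D.N (s + 1) : ℤ)), p k := by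
      refine Finset.prod_congr rfl fun k hk => ?_
      rw [Finset.mem_Ioc] at hk
      rw [h2 (s + 1) (by omega) k hk.1 hk.2, kx_half]
    have e2 : ∏ k ∈ Finset.Ioc (-(D.N (s + 1) : ℤ)) (-(D.M s : ℤ)), coordWt (p k) (w k)
        = (∏ k ∈ Finset.Ioc (-(D.N (s + 1) : ℤ)) (-(D.M s : ℤ)), p k)
          * D.lam (s + 1) ^ Ups D (s + 1) w := by
      have hlam := kx_lam_pos D (s + 1) (by omega)
      have : D.lam (s + 1) ^ Ups D (s + 1) w =
          ∏ k ∈ Finset.Ioc (-(D.N (s + 1) : ℤ)) (-(D.M s : ℤ)),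
            (if w k then D.lam (s + 1) else 1) := by
        have hI : Finset.Icc (-(D.N (s + 1) : ℤ) + 1) (-(D.M (s + 1 - 1) : ℤ))
            = Finset.Ioc (-(D.N (s + 1) : ℤ)) (-(D.M s : ℤ)) := by
          ext x; simp only [Finset.mem_Icc, Finset.mem_Ioc, Nat.add_sub_cancel]; omega
        unfold Ups
        rw [hI]
        generalize Finset.Ioc (-(D.N (s + 1) : ℤ)) (-(D.M s : ℤ)) = I
        induction I using Finset.induction_on with
        | empty => simp
        | insert a I ha ih =>
          rw [Finset.sum_insert ha, Finset.prod_insert ha, zpow_add₀ hlam.ne', ih]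
          congr 1
          split_ifs <;> simp
      rw [this, ← Finset.prod_mul_distrib]
      refine Finset.prod_congr rfl fun k hk => ?_
      rw [Finset.mem_Ioc] at hk
      rw [h1 (s + 1) (by omega) k hk.1 (by simpa using hk.2)]
      unfold coordWt
      split_ifs
      · field_simp; ring
      · simp
    rw [e1, e2, kx_fT_split D s (s + 1) (by omega) w]
    simp only [Finset.Icc_self, Finset.prod_singleton]
    ring

lemma kx_p_pos (D : KosloffData) (p : ℤ → ℝ) (P : Measure Xspace)
    (hP : IsKosloffMeasure D p P) (s : ℕ) (k : ℤ) (hk : -(D.M s : ℤ) < k) :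
    0 < p k ∧ p k < 1 := by
  obtain ⟨_, h0, h1, h2, _⟩ := hP
  induction s with
  | zero =>
    rw [D.M_zero] at hk
    rw [h0 k (by push_cast at hk; omega)]; norm_num
  | succ s ih =>
    by_cases c1 : -(D.M s : ℤ) < k
    · exact ih c1
    by_cases c2 : -(D.N (s + 1) : ℤ) < k
    · rw [h1 (s + 1) (by omega) k c2 (by simpa using c1)]
      have hlam := kx_lam_pos D (s + 1) (by omega)
      refine ⟨by positivity, ?_⟩
      rw [div_lt_one (by positivity)]; linarith
    · rw [h2 (s + 1) (by omega) k hk (by omega)]; norm_num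

lemma kx_coord_pos {p : ℝ} (h : 0 < p ∧ p < 1) (b : Bool) : 0 < coordWt p b := by
  unfold coordWt; split_ifs <;> linarith [h.1, h.2]

lemma kx_cyl_ratio (D : KosloffData) (p : ℤ → ℝ) (P : Measure Xspace)
    (hP : IsKosloffMeasure D p P) (s n : ℕ) (hs : 1 ≤ s) (hn : n < D.N s) (b : Xspace) :
    Measure.map (shiftInv^[n]) P
        {w : Xspace | ∀ i ∈ Finset.Icc (-(D.M s : ℤ) + n + 1) (D.M s), w i = b i}
      = ENNReal.ofReal (fT D s (shiftT^[n] b) / fT D s b) *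
        P {w : Xspace | ∀ i ∈ Finset.Icc (-(D.M s : ℤ) + n + 1) (D.M s), w i = b i} := by
  have hcyl := hP.2.2.2.2
  have hMN : 2 * D.N s ≤ D.M s := by
    obtain ⟨s, rfl⟩ : ∃ s', s = s' + 1 := ⟨s - 1, by omega⟩
    exact (kx_NM D s).2
  have I1 : ∀ a c : ℤ, Finset.Icc (a + 1) c = Finset.Ioc a c := by
    intro a c; ext x; simp only [Finset.mem_Icc, Finset.mem_Ioc]; omega
  rw [Measure.map_apply (kx_meas_inv n) (kx_cyl_meas _ _)]
  have epre : (shiftInv^[n]) ⁻¹'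
      {w : Xspace | ∀ i ∈ Finset.Icc (-(D.M s : ℤ) + n + 1) (D.M s), w i = b i}
      = {w : Xspace | ∀ i ∈ Finset.Icc (-(D.M s : ℤ) + 1) (D.M s - n), w i = (shiftT^[n] b) i} := by
    ext w
    simp only [Set.mem_preimage, Set.mem_ofPred_eq, kx_shiftInv_iter, kx_shiftT_iter,
      Finset.mem_Icc]
    constructor
    · intro h i hi
      have := h (i + n) (by omega)
      simpa using this
    · intro h i hi
      have := h (i - n) (by omega)
      simpa using this
  rw [epre, hcyl, hcyl, I1, I1]
  have pos : ∀ k : ℤ, -(D.M s : ℤ) < k → ∀ x, 0 < coordWt (p k) x := fun k hk x =>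
    kx_coord_pos (kx_p_pos D p P hP s k hk) x
  rw [← ENNReal.ofReal_prod_of_nonneg, ← ENNReal.ofReal_prod_of_nonneg, ← ENNReal.ofReal_mul]
  rotate_left
  · exact (div_pos (kx_fT_pos _ _ _) (kx_fT_pos _ _ _)).le
  · intro k hk; rw [Finset.mem_Ioc] at hk; exact (pos k (by omega) _).le
  · intro k hk; rw [Finset.mem_Ioc] at hk; exact (pos k (by omega) _).le
  congr 1
  have A := kx_prod_coord D p P hP s (D.M s - n) (by omega) (shiftT^[n] b)
  have B := kx_prod_coord D p P hP s (D.M s) (by omega) b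
  have S := fun f : ℤ → ℝ => kx_prod_split f (-(D.M s : ℤ)) (-(D.M s : ℤ) + n) (D.M s)
    (by omega) (by omega)
  have S' := fun f : ℤ → ℝ => kx_prod_split f (-(D.M s : ℤ)) (D.M s - n) (D.M s)
    (by omega) (by omega)
  have lowp : ∀ k ∈ Finset.Ioc (-(D.M s : ℤ)) (-(D.M s : ℤ) + n), p k = 1 / 2 := by
    intro k hk
    rw [Finset.mem_Ioc] at hk
    exact hP.2.2.2.1 s hs k hk.1 (by omega)
  have hip : ∀ k ∈ Finset.Ioc ((D.M s : ℤ) - n) (D.M s), p k = 1 / 2 := by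
    intro k hk
    rw [Finset.mem_Ioc] at hk
    exact hP.2.1 k (by omega)
  have L1 : ∏ k ∈ Finset.Ioc (-(D.M s : ℤ)) (-(D.M s : ℤ) + n), p k = (1 / 2) ^ n := by
    rw [Finset.prod_congr rfl lowp, Finset.prod_const]; simp
  have L2 : ∏ k ∈ Finset.Ioc (-(D.M s : ℤ)) (-(D.M s : ℤ) + n), coordWt (p k) (b k)
      = (1 / 2) ^ n := by
    rw [Finset.prod_congr rfl fun k hk => by rw [lowp k hk, kx_half], Finset.prod_const]; simp
  have H1 : ∏ k ∈ Finset.Ioc ((D.M s : ℤ) - n) (D.M s), p k = (1 / 2) ^ n := by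
    rw [Finset.prod_congr rfl hip, Finset.prod_const]; simp
  rw [S, L2] at B
  have C := S' p
  rw [H1] at C
  rw [C] at B
  rw [A]
  have hh : ((1:ℝ) / 2) ^ n ≠ 0 := by positivity
  have hB : ∏ k ∈ Finset.Ioc (-(D.M s : ℤ) + n) (D.M s), coordWt (p k) (b k)
      = (∏ k ∈ Finset.Ioc (-(D.M s : ℤ)) (D.M s - n), p k) * fT D s b := by
    apply mul_left_cancel₀ hh
    rw [B]; ring
  rw [hB]
  have := (kx_fT_pos D s b).ne'
  field_simp

lemma kx_Ups_congr (D : KosloffData) (u : ℕ) (w b : Xspace)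
    (h : ∀ k : ℤ, -(D.N u : ℤ) < k → k ≤ -(D.M (u - 1) : ℤ) → w k = b k) :
    Ups D u w = Ups D u b := by
  unfold Ups
  refine Finset.sum_congr rfl fun k hk => ?_
  rw [Finset.mem_Icc] at hk
  rw [h k (by omega) (by omega)]

lemma kx_fT_congr (D : KosloffData) (s n t : ℕ) (hts : t ≤ s) (hs : 1 ≤ s) (hn : n < D.N s)
    (w b : Xspace)
    (h : ∀ i ∈ Finset.Icc (-(D.M s : ℤ) + n + 1) (D.M s), w i = b i) :
    fT D t w = fT D t b ∧ fT D t (shiftT^[n] w) = fT D t (shiftT^[n] b) := by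
  have hMN : 2 * D.N s ≤ D.M s := by
    obtain ⟨s, rfl⟩ : ∃ s', s = s' + 1 := ⟨s - 1, by omega⟩
    exact (kx_NM D s).2
  unfold fT
  constructor
  all_goals
    refine Finset.prod_congr rfl fun u hu => ?_
    rw [Finset.mem_Icc] at hu
    have := kx_N_le D hu.1 (hu.2.trans hts)
    congr 1
    refine kx_Ups_congr D u _ _ fun k hk hk' => ?_
    try simp only [kx_shiftT_iter]
    refine h _ ?_
    rw [Finset.mem_Icc]
    omega

lemma kx_wd_cyl (P : Measure Xspace) (J : Finset ℤ) (b : Xspace) (g : Xspace → ℝ) (c : ℝ)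
    (h : ∀ w : Xspace, (∀ k ∈ J, w k = b k) → g w = g b) :
    P.withDensity (fun w => ENNReal.ofReal (c * g w)) {w : Xspace | ∀ k ∈ J, w k = b k}
      = ENNReal.ofReal (c * g b) * P {w : Xspace | ∀ k ∈ J, w k = b k} := by
  rw [withDensity_apply _ (kx_cyl_meas _ _),
    setLIntegral_congr_fun (g := fun _ => ENNReal.ofReal (c * g b)) (kx_cyl_meas _ _)
      (fun w hw => by simp only; rw [h w hw]), setLIntegral_const]

lemma kx_wd_fin (P : Measure Xspace) [IsFiniteMeasure P] (g : Xspace → ℝ) (c B : ℝ)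
    (hc : 0 ≤ B) (hg : ∀ w, c * g w ≤ B) :
    IsFiniteMeasure (P.withDensity (fun w => ENNReal.ofReal (c * g w))) := by
  have h : ∫⁻ w, ENNReal.ofReal (c * g w) ∂P ≤ ∫⁻ _, ENNReal.ofReal B ∂P :=
    lintegral_mono fun w => ENNReal.ofReal_le_ofReal (hg w)
  rw [lintegral_const] at h
  exact isFiniteMeasure_withDensity (ne_top_of_le_ne_top
    (ENNReal.mul_ne_top ENNReal.ofReal_ne_top (measure_ne_top P Set.univ)) h)

lemma kx_cont_T (n : ℕ) : Continuous (shiftT^[n] : Xspace → Xspace) := by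
  refine continuous_pi fun i => ?_
  simp only [kx_shiftT_iter]
  exact continuous_apply _

lemma kx_cont_fT (D : KosloffData) (t : ℕ) : Continuous (fT D t) := by
  unfold fT
  refine continuous_finsetProd _ fun u _ => ?_
  have h1 : Continuous (Ups D u) := by
    unfold Ups
    refine continuous_finsetSum _ fun k _ => ?_
    exact (continuous_of_discreteTopology (f := fun b : Bool => if b then (1:ℤ) else 0)).comp
      (continuous_apply k)
  exact (continuous_of_discreteTopology (f := fun z : ℤ => D.lam u ^ z)).comp h1

lemma kx_main (D : KosloffData) (p : ℤ → ℝ) (P : Measure Xspace)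
    (hP : IsKosloffMeasure D p P) (t n : ℕ) (hn : n < D.M t) (η δ : ℝ) (hδ : 0 < δ)
    (e1 : Real.exp η ≤ 1 + δ) (e2 : 1 - δ ≤ Real.exp (-η))
    (hη : ∀ s, ∑ u ∈ Finset.Icc (t + 1) s, D.eps u ≤ η) :
    ∀ᵐ w ∂P, |(rnD P n w).toReal * fT D t w / fT D t (shiftT^[n] w) - 1| ≤ δ := by
  have hprob := hP.1
  let g : Xspace → ℝ := fun w => fT D t (shiftT^[n] w) / fT D t w
  have hgc : Continuous g := ((kx_cont_fT D t).comp (kx_cont_T n)).div (kx_cont_fT D t)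
    fun w => (kx_fT_pos D t w).ne'
  have hgpos : ∀ w, 0 < g w := fun w => div_pos (kx_fT_pos _ _ _) (kx_fT_pos _ _ _)
  obtain ⟨B, hB⟩ := isCompact_univ.exists_bound_of_continuousOn hgc.continuousOn
  have hB' : ∀ w, g w ≤ |B| := fun w =>
    (le_abs_self _).trans ((hB w (Set.mem_univ _)).trans (le_abs_self _))
  have fin1 := kx_wd_fin P g (1 + δ) ((1 + δ) * |B|) (by positivity)
    fun w => mul_le_mul_of_nonneg_left (hB' w) (by positivity)
  have fin2 := kx_wd_fin P g (1 - δ) |B| (by positivity)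
    fun w => by nlinarith [hB' w, hgpos w]
  have finQ : IsFiniteMeasure (Measure.map (shiftInv^[n]) P) := inferInstance
  let J : ℕ → Finset ℤ := fun i => Finset.Icc (-(D.M (t + 1 + i) : ℤ) + n + 1) (D.M (t + 1 + i))
  have hJ : Monotone J := by
    intro i j hij
    have := (kx_M_strict D).monotone (show t + 1 + i ≤ t + 1 + j by omega)
    exact Finset.Icc_subset_Icc (by omega) (by omega)
  have hex : ∀ k : ℤ, ∃ i, k ∈ J i := by
    intro k
    refine ⟨k.natAbs + n, ?_⟩
    have := (kx_M_strict D).le_apply (x := t + 1 + (k.natAbs + n))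
    simp only [J, Finset.mem_Icc]
    omega
  have hN : ∀ i, n < D.N (t + 1 + i) := fun i => by
    have h1 := (kx_NM D t).1
    have h2 := kx_N_le D (show 1 ≤ t + 1 by omega) (show t + 1 ≤ t + 1 + i by omega)
    omega
  have hgcyl : ∀ i (b w : Xspace), (∀ k ∈ J i, w k = b k) → g w = g b := by
    intro i b w hw
    obtain ⟨h1, h2⟩ := kx_fT_congr D (t + 1 + i) n t (by omega) (by omega) (hN i) w b hw
    simp only [g, h1, h2]
  have h1 : Measure.map (shiftInv^[n]) P ≤
      P.withDensity fun w => ENNReal.ofReal ((1 + δ) * g w) := by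
    refine kx_cyl_le _ _ J hJ hex fun i b => ?_
    rw [kx_wd_cyl P (J i) b g (1 + δ) (hgcyl i b),
      kx_cyl_ratio D p P hP (t + 1 + i) n (by omega) (hN i) b]
    obtain ⟨q, hq1, hq2, hq⟩ := kx_ratio D t (t + 1 + i) n (by omega) hn.le b η (hη _)
    rw [hq]
    refine mul_le_mul_left (ENNReal.ofReal_le_ofReal ?_) _
    exact mul_le_mul_of_nonneg_right (hq2.trans e1) (hgpos b).le
  have h2 : P.withDensity (fun w => ENNReal.ofReal ((1 - δ) * g w)) ≤
      Measure.map (shiftInv^[n]) P := by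
    refine kx_cyl_le _ _ J hJ hex fun i b => ?_
    rw [kx_wd_cyl P (J i) b g (1 - δ) (hgcyl i b),
      kx_cyl_ratio D p P hP (t + 1 + i) n (by omega) (hN i) b]
    obtain ⟨q, hq1, hq2, hq⟩ := kx_ratio D t (t + 1 + i) n (by omega) hn.le b η (hη _)
    rw [hq]
    refine mul_le_mul_left (ENNReal.ofReal_le_ofReal ?_) _
    exact mul_le_mul_of_nonneg_right (e2.trans hq1) (hgpos b).le
  have := kx_rn P _ g hgc.measurable hgpos δ hδ h1 h2
  filter_upwards [this] with w hw
  have e : (rnD P n w).toReal * fT D t w / fT D t (shiftT^[n] w)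
      = ((Measure.map (shiftInv^[n]) P).rnDeriv P w).toReal / g w := by
    simp only [rnD, g]
    rw [div_div_eq_mul_div]
  rw [e]
  exact hw

/-- for `N_{t(n)-1} ≤ n < M_{t(n)-1}` one has
`(Tⁿ)'(w) = K_n(w) · f_{t(n)-1}(Tⁿw)/f_{t(n)-1}(w)` where
`K_n(w) = (Tⁿ)'(w) · f_{t(n)-1}(w)/f_{t(n)-1}(Tⁿw)` tends to `1` uniformly (a.e.) in `w`. -/
theorem rnDeriv_eq_K_mul_f_ratio (D : KosloffData) (p : ℤ → ℝ) (P : Measure Xspace)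
    (hP : IsKosloffMeasure D p P) :
    (∀ n : ℕ, D.N (tOf D n - 1) ≤ n → n < D.M (tOf D n - 1) → ∀ w : Xspace,
      (rnD P n w).toReal =
        ((rnD P n w).toReal * fT D (tOf D n - 1) w / fT D (tOf D n - 1) (shiftT^[n] w))
          * (fT D (tOf D n - 1) (shiftT^[n] w) / fT D (tOf D n - 1) w)) ∧
    (∀ δ : ℝ, 0 < δ → ∃ n₀ : ℕ, ∀ n : ℕ, n₀ ≤ n →
      D.N (tOf D n - 1) ≤ n → n < D.M (tOf D n - 1) →
      ∀ᵐ w ∂P,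
        |(rnD P n w).toReal * fT D (tOf D n - 1) w / fT D (tOf D n - 1) (shiftT^[n] w) - 1|
          ≤ δ) := by
  refine ⟨?_, ?_⟩
  · intro n _ _ w
    have h1 := (kx_fT_pos D (tOf D n - 1) w).ne'
    have h2 := (kx_fT_pos D (tOf D n - 1) (shiftT^[n] w)).ne'
    field_simp
  · intro δ hδ
    have hlog : 0 < Real.log (1 + δ) := Real.log_pos (by linarith)
    obtain ⟨S, hS⟩ := summable_iff_vanishing_norm.1 D.eps_summable (Real.log (1 + δ)) hlog
    refine ⟨∑ u ∈ Finset.range (S.sup id + 2), D.N u, fun n hn _ hnM => ?_⟩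
    have ht := kx_tOf D n
    have hbig : S.sup id + 2 ≤ tOf D n := by
      by_contra hlt
      have : D.N (tOf D n) ≤ ∑ u ∈ Finset.range (S.sup id + 2), D.N u :=
        Finset.single_le_sum (f := D.N) (fun _ _ => Nat.zero_le _)
          (Finset.mem_range.2 (by omega))
      omega
    refine kx_main D p P hP (tOf D n - 1) n hnM (Real.log (1 + δ)) δ hδ ?_ ?_ ?_
    · rw [Real.exp_log (by linarith)]
    · rw [Real.exp_neg, Real.exp_log (by linarith), ← one_div, le_div_iff₀ (by linarith)]
      nlinarith
    · intro s
      refine ((le_abs_self _).trans_lt (hS _ ?_)).le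
      rw [Finset.disjoint_left]
      intro x hx hxS
      have : x ≤ S.sup id := Finset.le_sup (f := id) hxS
      rw [Finset.mem_Icc] at hx
      omega
end
end
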